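/- Suppose μ is a T-ergodic Borel probability measure on Ω that has a local product structure and full support (supp μ = Ω), suppose T has a fixed point in Ω, and suppose the set 𝔏(A,μ) = {k ∈ [0,π] : L(A^{(k)}, μ) = 0} is infinite. Then for every T-periodic point p ∈ Ω, the spectrum of the operator H̃_p coincides with the interval [−1, 1]. -/

import Mathlib

open Real MeasureTheory Filter Topology Matrix Set

noncomputable section

/-- The left shift on bi-infinite sequences: `(Tω)_n = ω_{n+1}`. -/
def shift (ω : ℤ → ℕ) : ℤ → ℕ := fun n => ω (n + 1)

/-- The subshift of finite type: sequences with letters in `{1,…,ℓ}` and all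
transitions `(ω_n, ω_{n+1})` in the allowed set `W`. -/
def SFT (ℓ : ℕ) (W : Set (ℕ × ℕ)) : Set (ℤ → ℕ) :=
  {ω | (∀ n, 1 ≤ ω n ∧ ω n ≤ ℓ) ∧ ∀ n, (ω n, ω (n + 1)) ∈ W}

/-- The cocycle matrix
`A^{(k)}(ω) = √(ω₀/ω₋₁)·[[((ω₀+ω₋₁)/ω₀)·cos k, −ω₋₁/ω₀],[1, 0]]`. -/
def Acoc (k : ℝ) (ω : ℤ → ℕ) : Matrix (Fin 2) (Fin 2) ℝ :=
  Real.sqrt ((ω 0 : ℝ) / (ω (-1) : ℝ)) •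
    !![((ω 0 : ℝ) + (ω (-1) : ℝ)) / (ω 0 : ℝ) * Real.cos k, -((ω (-1) : ℝ) / (ω 0 : ℝ));
       (1 : ℝ), 0]

/-- The iterated cocycle `A_n(ω) = A^{(k)}(T^{n−1}ω)⋯A^{(k)}(ω)` for `n ≥ 0`,
with `A_0(ω) = Id`. -/
def AIter (k : ℝ) (ω : ℤ → ℕ) : ℕ → Matrix (Fin 2) (Fin 2) ℝ
  | 0 => 1
  | n + 1 => Acoc k (shift^[n] ω) * AIter k ω n

end

/-- We endow 2×2 real matrices with the `L²` operator norm. -/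
noncomputable instance : NormedAddCommGroup (Matrix (Fin 2) (Fin 2) ℝ) :=
  Matrix.instL2OpNormedAddCommGroup

/-- Projection onto nonnegative coordinates: `π₊ω = (ω_n)_{n≥0}`. -/
def projPlus (ω : ℤ → ℕ) : ℕ → ℕ := fun n => ω (n : ℤ)

/-- Projection onto nonpositive coordinates: `π₋ω = (ω_{−n})_{n≥0}`. -/
def projMinus (ω : ℤ → ℕ) : ℕ → ℕ := fun n => ω (-(n : ℤ))

/-- The map `P(ω) = (π₋ω, π₊ω)`; on each cylinder `[0;j]` this is the map `P_j`. -/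
def pairProj (ω : ℤ → ℕ) : (ℕ → ℕ) × (ℕ → ℕ) := (projMinus ω, projPlus ω)

/-- `μ` has a local product structure: there is a positive function `ψ` on `Ω`
(written as `ψ ∘ P` for a function on `Ω₋ × Ω₊`) such that for each letter `j`,
`ψ∘P_j⁻¹` is integrable with respect to `μ_j^− × μ_j^+` and
`(P_j)_* μ_j = (ψ∘P_j⁻¹) d(μ_j^− × μ_j^+)`. -/
def LocalProductStructure (ℓ : ℕ) (W : Set (ℕ × ℕ)) (μ : Measure (ℤ → ℕ)) : Prop :=
  ∃ ψ : (ℕ → ℕ) × (ℕ → ℕ) → ℝ,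
    (∀ ω ∈ SFT ℓ W, 0 < ψ (pairProj ω)) ∧
    ∀ j : ℕ, 1 ≤ j → j ≤ ℓ →
      MeasureTheory.Integrable ψ
        (((Measure.map projMinus μ).restrict {a | a 0 = j}).prod
          ((Measure.map projPlus μ).restrict {a | a 0 = j})) ∧
      Measure.map pairProj (μ.restrict {ω | ω 0 = j}) =
        (((Measure.map projMinus μ).restrict {a | a 0 = j}).prod
          ((Measure.map projPlus μ).restrict {a | a 0 = j})).withDensity
          (fun x => ENNReal.ofReal (ψ x))

/-- `supp μ = Ω`: every open set meeting `Ω` has positive measure. -/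
def FullSupport (ℓ : ℕ) (W : Set (ℕ × ℕ)) (μ : Measure (ℤ → ℕ)) : Prop :=
  ∀ U : Set (ℤ → ℕ), IsOpen U → (U ∩ SFT ℓ W).Nonempty → 0 < μ U

/-- `ℓ²(ℤ)` over `ℝ`. -/
abbrev L2Z : Type := lp (fun _ : ℤ => ℝ) 2

/-- `H` is the periodic Jacobi-type operator `H̃_p` on `ℓ²(ℤ)`:
`(H̃_p u)(n) = (p_n/(p_n+p_{n−1}))·u(n+1) + (p_{n−1}/(p_n+p_{n−1}))·u(n−1)`. -/
def IsJacobiOp (p : ℤ → ℕ) (H : L2Z →L[ℝ] L2Z) : Prop :=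
  ∀ u : L2Z, ∀ n : ℤ,
    (H u : ∀ _ : ℤ, ℝ) n =
      ((p n : ℝ) / ((p n : ℝ) + (p (n - 1) : ℝ))) * (u : ∀ _ : ℤ, ℝ) (n + 1) +
      ((p (n - 1) : ℝ) / ((p n : ℝ) + (p (n - 1) : ℝ))) * (u : ∀ _ : ℤ, ℝ) (n - 1)

/-- A pointwise Pinsker-type inequality. -/
lemma abs_sub_le_entropy {p q ε : ℝ} (hp : 0 < p) (hq : 0 < q) (hε : 0 < ε) :
    |p - q| ≤ 1 / (2 * ε) * (p * log p - p * log q - p + q) + ε * (p + q) := by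
  obtain ⟨a, ha, rfl⟩ : ∃ a : ℝ, 0 < a ∧ p = a ^ 2 := ⟨√p, by positivity, (sq_sqrt hp.le).symm⟩
  obtain ⟨b, hb, rfl⟩ : ∃ b : ℝ, 0 < b ∧ q = b ^ 2 := ⟨√q, by positivity, (sq_sqrt hq.le).symm⟩
  have h1 : log b - log a ≤ b / a - 1 := by
    rw [← log_div hb.ne' ha.ne']; exact log_le_sub_one_of_pos (by positivity)
  have h2 : (a - b) ^ 2 ≤ a ^ 2 * log (a ^ 2) - a ^ 2 * log (b ^ 2) - a ^ 2 + b ^ 2 := by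
    rw [log_pow, log_pow]
    have h3 := mul_le_mul_of_nonneg_left h1 (sq_nonneg a)
    have h4 : a ^ 2 * (b / a - 1) = a * b - a ^ 2 := by field_simp
    push_cast
    nlinarith
  have h5 : |a ^ 2 - b ^ 2| ≤ 1 / (2 * ε) * (a - b) ^ 2 + ε * (a ^ 2 + b ^ 2) := by
    have h6 : |a ^ 2 - b ^ 2| = |a - b| * (a + b) := by
      rw [show a ^ 2 - b ^ 2 = (a - b) * (a + b) by ring, abs_mul, abs_of_pos (a := a + b) (by positivity)]
    rw [h6, ← sq_abs (a - b)]
    set d := |a - b|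
    have h7 : d * (a + b) ≤ 1 / (2 * ε) * d ^ 2 + ε / 2 * (a + b) ^ 2 := by
      have : 1 / (2 * ε) * d ^ 2 + ε / 2 * (a + b) ^ 2 - d * (a + b)
          = 1 / (2 * ε) * (d - ε * (a + b)) ^ 2 := by field_simp; ring
      have h8 : 0 ≤ 1 / (2 * ε) * (d - ε * (a + b)) ^ 2 := by positivity
      linarith
    nlinarith [mul_nonneg hε.le (sq_nonneg (a - b))]
  have h9 := mul_le_mul_of_nonneg_left h2 (show 0 ≤ 1 / (2 * ε) by positivity)
  linarith

lemma entropy_nonneg {p q : ℝ} (hp : 0 < p) (hq : 0 < q) :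
    0 ≤ p * log p - p * log q - p + q := by
  have h1 : log q - log p ≤ q / p - 1 := by
    rw [← log_div hq.ne' hp.ne']; exact log_le_sub_one_of_pos (by positivity)
  have h3 := mul_le_mul_of_nonneg_left h1 hp.le
  have h4 : p * (q / p - 1) = q - p := by field_simp
  nlinarith

lemma ae_log_mem_Icc {Ω : Type*} {m0 : MeasurableSpace Ω} {μ : Measure Ω} {Y : Ω → ℝ}
    {c C : ℝ} (hc : 0 < c)
    (hY : ∀ᵐ ω ∂μ, Y ω ∈ Icc c C) : ∀ᵐ ω ∂μ, log (Y ω) ∈ Icc (log c) (log C) :=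
  hY.mono fun _ h => ⟨log_le_log hc h.1, log_le_log (hc.trans_le h.1) h.2⟩

section Entropy

variable {Ω : Type*} {m m0 : MeasurableSpace Ω} {μ : Measure Ω} [IsProbabilityMeasure μ]

lemma condExp_mem_Icc (hm : m ≤ m0) {Y : Ω → ℝ} {c C : ℝ}
    (hYi : Integrable Y μ) (hY : ∀ᵐ ω ∂μ, Y ω ∈ Icc c C) : ∀ᵐ ω ∂μ, (μ[Y|m]) ω ∈ Icc c C := by
  have h1 : (fun _ => c) ≤ᵐ[μ] μ[Y|m] := by
    rw [← condExp_const (μ := μ) hm c]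
    exact condExp_mono (integrable_const _) hYi (hY.mono fun _ h => h.1)
  have h2 : μ[Y|m] ≤ᵐ[μ] (fun _ => C) := by
    rw [← condExp_const (μ := μ) hm C]
    exact condExp_mono hYi (integrable_const _) (hY.mono fun _ h => h.2)
  filter_upwards [h1, h2] with ω a b using ⟨a, b⟩

lemma integral_mul_condExp_of_bound (hm : m ≤ m0) {Y Z : Ω → ℝ} {K : ℝ}
    (hZm : AEStronglyMeasurable[m] Z μ) (hZ : ∀ᵐ ω ∂μ, |Z ω| ≤ K) (hYi : Integrable Y μ) :
    ∫ ω, Z ω * (μ[Y|m]) ω ∂μ = ∫ ω, Z ω * Y ω ∂μ := by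
  have hZY : Integrable (fun ω => Z ω * Y ω) μ :=
    hYi.bdd_mul (hZm.mono hm) hZ
  have h := condExp_mul_of_aestronglyMeasurable_left hZm hZY hYi
  rw [← integral_condExp hm (f := fun ω => Z ω * Y ω)]
  exact (integral_congr_ae h).symm

/-- Entropy increments control the `L¹` size of martingale differences. -/
lemma integral_abs_sub_condExp_le (hm : m ≤ m0) {Y : Ω → ℝ} {c C ε : ℝ} (hc : 0 < c) (hε : 0 < ε)
    (hYi : Integrable Y μ) (hY : ∀ᵐ ω ∂μ, Y ω ∈ Icc c C) :
    ∫ ω, |Y ω - (μ[Y|m]) ω| ∂μ ≤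
      1 / (2 * ε) * (∫ ω, Y ω * log (Y ω) ∂μ - ∫ ω, (μ[Y|m]) ω * log ((μ[Y|m]) ω) ∂μ)
        + 2 * ε * ∫ ω, Y ω ∂μ ∧
    ∫ ω, (μ[Y|m]) ω * log ((μ[Y|m]) ω) ∂μ ≤ ∫ ω, Y ω * log (Y ω) ∂μ := by
  set h := μ[Y|m] with hh
  have hhi : Integrable h μ := integrable_condExp
  have hhb : ∀ᵐ ω ∂μ, h ω ∈ Icc c C := condExp_mem_Icc hm hYi hY
  have hlogYm : AEStronglyMeasurable (fun ω => log (Y ω)) μ :=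
    (measurable_log.comp_aemeasurable hYi.aemeasurable).aestronglyMeasurable
  have hlogh0 : StronglyMeasurable[m] (fun ω => log (h ω)) :=
    (measurable_log.comp (stronglyMeasurable_condExp (m := m) (μ := μ) (f := Y)).measurable).stronglyMeasurable
  have hloghm : AEStronglyMeasurable (fun ω => log (h ω)) μ := (hlogh0.mono hm).aestronglyMeasurable
  have bY : ∀ᵐ ω ∂μ, ‖log (Y ω)‖ ≤ max |log c| |log C| :=
    (ae_log_mem_Icc hc hY).mono fun _ h => abs_le_max_abs_abs h.1 h.2
  have bh : ∀ᵐ ω ∂μ, ‖log (h ω)‖ ≤ max |log c| |log C| :=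
    (ae_log_mem_Icc hc hhb).mono fun _ h => abs_le_max_abs_abs h.1 h.2
  have i1 : Integrable (fun ω => Y ω * log (Y ω)) μ := hYi.mul_bdd hlogYm bY
  have i2 : Integrable (fun ω => Y ω * log (h ω)) μ := hYi.mul_bdd hloghm bh
  have e1 : ∫ ω, Y ω * log (h ω) ∂μ = ∫ ω, h ω * log (h ω) ∂μ := by
    have := integral_mul_condExp_of_bound hm hlogh0.aestronglyMeasurable bh hYi
    simp only [mul_comm (log _)] at this
    exact this.symm
  have e2 : ∫ ω, h ω ∂μ = ∫ ω, Y ω ∂μ := integral_condExp hm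
  have i4 : Integrable (fun ω => Y ω * log (Y ω) - Y ω * log (h ω)) μ := i1.sub i2
  have i5 : Integrable (fun ω => Y ω * log (Y ω) - Y ω * log (h ω) - Y ω) μ := i4.sub hYi
  have i6 : Integrable (fun ω => Y ω + h ω) μ := hYi.add hhi
  have e3 : ∫ ω, (Y ω * log (Y ω) - Y ω * log (h ω) - Y ω + h ω) ∂μ
      = ∫ ω, Y ω * log (Y ω) ∂μ - ∫ ω, h ω * log (h ω) ∂μ := by
    rw [integral_add i5 hhi, integral_sub i4 hYi, integral_sub i1 i2, e1, e2]; ring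
  have i3 : Integrable (fun ω => Y ω * log (Y ω) - Y ω * log (h ω) - Y ω + h ω) μ :=
    i5.add hhi
  constructor
  · have : ∫ ω, |Y ω - h ω| ∂μ ≤ ∫ ω, (1 / (2 * ε) *
        (Y ω * log (Y ω) - Y ω * log (h ω) - Y ω + h ω) + ε * (Y ω + h ω)) ∂μ := by
      refine integral_mono_ae (hYi.sub hhi).abs ((i3.const_mul _).add (i6.const_mul _)) ?_
      filter_upwards [hY, hhb] with ω a b
      exact abs_sub_le_entropy (hc.trans_le a.1) (hc.trans_le b.1) hε
    refine this.trans (le_of_eq ?_)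
    rw [integral_add (i3.const_mul _) (i6.const_mul _), integral_const_mul, e3,
      integral_const_mul, integral_add hYi hhi, e2]
    ring
  · rw [← sub_nonneg, ← e3]
    refine integral_nonneg_of_ae ?_
    filter_upwards [hY, hhb] with ω a b
    exact entropy_nonneg (hc.trans_le a.1) (hc.trans_le b.1)

/-- The total `L¹` variation of the martingale of a bounded positive variable is controlled by its
entropy. -/
lemma sum_integral_abs_condExp_sub_le {G : ℕ → MeasurableSpace Ω} (hGm : ∀ q, G q ≤ m0)
    (hG : Monotone G) {Y : Ω → ℝ} {c C ε : ℝ} (hc : 0 < c) (hε : 0 < ε)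
    (hYi : Integrable Y μ) (hY : ∀ᵐ ω ∂μ, Y ω ∈ Icc c C) (N : ℕ) :
    ∑ q ∈ Finset.range N, ∫ ω, |(μ[Y|G (q + 1)]) ω - (μ[Y|G q]) ω| ∂μ ≤
      1 / (2 * ε) * (∫ ω, Y ω * log (Y ω) ∂μ - ∫ ω, Y ω ∂μ + 1) + 2 * ε * N * ∫ ω, Y ω ∂μ := by
  set a : ℕ → ℝ := fun q => ∫ ω, (μ[Y|G q]) ω * log ((μ[Y|G q]) ω) ∂μ with ha
  have step : ∀ q, ∫ ω, |(μ[Y|G (q + 1)]) ω - (μ[Y|G q]) ω| ∂μ ≤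
      1 / (2 * ε) * (a (q + 1) - a q) + 2 * ε * ∫ ω, Y ω ∂μ := by
    intro q
    have tower : μ[μ[Y|G (q + 1)]|G q] =ᵐ[μ] μ[Y|G q] :=
      condExp_condExp_of_le (hG (Nat.le_succ q)) (hGm _)
    have h := (integral_abs_sub_condExp_le (hGm q) hc hε
      (integrable_condExp (μ := μ) (m := G (q + 1)) (f := Y)) (condExp_mem_Icc (hGm _) hYi hY)).1
    have r1 : ∫ ω, |(μ[Y|G (q + 1)]) ω - (μ[μ[Y|G (q + 1)]|G q]) ω| ∂μ =
        ∫ ω, |(μ[Y|G (q + 1)]) ω - (μ[Y|G q]) ω| ∂μ :=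
      integral_congr_ae (tower.mono fun ω h => by simp only [h])
    have r2 : ∫ ω, (μ[μ[Y|G (q + 1)]|G q]) ω * log ((μ[μ[Y|G (q + 1)]|G q]) ω) ∂μ = a q :=
      integral_congr_ae (tower.mono fun ω h => by simp only [h])
    rw [r1, r2, integral_condExp (hGm _)] at h
    exact h
  have hN : a N ≤ ∫ ω, Y ω * log (Y ω) ∂μ :=
    (integral_abs_sub_condExp_le (hGm N) hc hε hYi hY).2
  have h0 : ∫ ω, Y ω ∂μ - 1 ≤ a 0 := by
    have hb := condExp_mem_Icc (hGm 0) hYi hY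
    have hi : Integrable (μ[Y|G 0]) μ := integrable_condExp
    have e : ∫ ω, ((μ[Y|G 0]) ω - 1) ∂μ = ∫ ω, Y ω ∂μ - 1 := by
      rw [integral_sub hi (integrable_const _), integral_condExp (hGm 0)]; simp
    rw [← e]
    refine integral_mono_ae (hi.sub (integrable_const _)) ?_ ?_
    · refine hi.mul_bdd (c := max |log c| |log C|) ?_ ?_
      · exact (measurable_log.comp_aemeasurable hi.aemeasurable).aestronglyMeasurable
      · exact (ae_log_mem_Icc hc hb).mono fun _ h => abs_le_max_abs_abs h.1 h.2
    · filter_upwards [hb] with ω h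
      have := entropy_nonneg (hc.trans_le h.1) one_pos
      rw [log_one] at this
      linarith
  calc _ ≤ ∑ q ∈ Finset.range N, (1 / (2 * ε) * (a (q + 1) - a q) + 2 * ε * ∫ ω, Y ω ∂μ) :=
        Finset.sum_le_sum fun q _ => step q
    _ = 1 / (2 * ε) * (a N - a 0) + 2 * ε * N * ∫ ω, Y ω ∂μ := by
        rw [Finset.sum_add_distrib, ← Finset.mul_sum, Finset.sum_range_sub]
        simp; ring
    _ ≤ _ := by
        have : 1 / (2 * ε) * (a N - a 0) ≤
          1 / (2 * ε) * (∫ ω, Y ω * log (Y ω) ∂μ - ∫ ω, Y ω ∂μ + 1) :=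
          mul_le_mul_of_nonneg_left (by linarith) (by positivity)
        linarith

/-- Correlations of a martingale increment with earlier information. -/
lemma abs_integral_sub_mul_le {G₀ G₁ : MeasurableSpace Ω} (h0 : G₀ ≤ m0) (h1 : G₁ ≤ m0)
    (h01 : G₀ ≤ G₁) {Y χ ξ θ : Ω → ℝ} {C K D : ℝ} (hYi : Integrable Y μ) (hY : ∀ᵐ ω ∂μ, |Y ω| ≤ C)
    (hχm : StronglyMeasurable[G₁] χ) (hχ : ∀ ω, |χ ω| ≤ K)
    (hξm : StronglyMeasurable[G₀] ξ) (hξ : ∀ᵐ ω ∂μ, |ξ ω| ≤ K)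
    (hθm : StronglyMeasurable[G₀] θ) (hθ : ∀ ω, |θ ω| ≤ D)
    (hχξ : ∀ Z : Ω → ℝ, StronglyMeasurable[G₀] Z → (∃ B, ∀ᵐ ω ∂μ, |Z ω| ≤ B) →
      ∫ ω, ξ ω * Z ω ∂μ = ∫ ω, χ ω * Z ω ∂μ) :
    |∫ ω, (χ ω - ξ ω) * (θ ω * Y ω) ∂μ| ≤ K * D * ∫ ω, |(μ[Y|G₁]) ω - (μ[Y|G₀]) ω| ∂μ := by
  have bd : ∀ {f g : Ω → ℝ} {a b : ℝ}, (∀ᵐ ω ∂μ, |f ω| ≤ a) → (∀ᵐ ω ∂μ, |g ω| ≤ b) →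
      ∀ᵐ ω ∂μ, |f ω * g ω| ≤ a * b := by
    intro f g a b hf hg
    filter_upwards [hf, hg] with ω p q
    rw [abs_mul]; exact mul_le_mul p q (abs_nonneg _) ((abs_nonneg _).trans p)
  have hχ' : ∀ᵐ ω ∂μ, |χ ω| ≤ K := .of_forall hχ
  have hθ' : ∀ᵐ ω ∂μ, |θ ω| ≤ D := .of_forall hθ
  have hχθm : StronglyMeasurable[G₁] (fun ω => χ ω * θ ω) := hχm.mul (hθm.mono h01)
  have hξθm : StronglyMeasurable[G₀] (fun ω => ξ ω * θ ω) := hξm.mul hθm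
  have i1 : Integrable (fun ω => χ ω * θ ω * Y ω) μ :=
    hYi.bdd_mul (hχθm.mono h1).aestronglyMeasurable (bd hχ' hθ')
  have i2 : Integrable (fun ω => ξ ω * θ ω * Y ω) μ :=
    hYi.bdd_mul (hξθm.mono h0).aestronglyMeasurable (bd hξ hθ')
  have j1 : Integrable (fun ω => χ ω * θ ω * (μ[Y|G₁]) ω) μ :=
    integrable_condExp.bdd_mul (hχθm.mono h1).aestronglyMeasurable (bd hχ' hθ')
  have j2 : Integrable (fun ω => χ ω * θ ω * (μ[Y|G₀]) ω) μ :=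
    integrable_condExp.bdd_mul (hχθm.mono h1).aestronglyMeasurable (bd hχ' hθ')
  have hhb : ∀ᵐ ω ∂μ, |(μ[Y|G₀]) ω| ≤ C :=
    (condExp_mem_Icc h0 hYi (hY.mono fun ω h => abs_le.1 h)).mono fun ω h => abs_le.2 h
  have e1 := integral_mul_condExp_of_bound h1 hχθm.aestronglyMeasurable (bd hχ' hθ') hYi
  have e2 := integral_mul_condExp_of_bound h0 hξθm.aestronglyMeasurable (bd hξ hθ') hYi
  have e3 := hχξ (fun ω => θ ω * (μ[Y|G₀]) ω) (hθm.mul stronglyMeasurable_condExp) ⟨_, bd hθ' hhb⟩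
  have key : ∫ ω, (χ ω - ξ ω) * (θ ω * Y ω) ∂μ =
      ∫ ω, χ ω * θ ω * ((μ[Y|G₁]) ω - (μ[Y|G₀]) ω) ∂μ := by
    calc _ = ∫ ω, (χ ω * θ ω * Y ω - ξ ω * θ ω * Y ω) ∂μ := by congr 1; ext ω; ring
      _ = ∫ ω, χ ω * θ ω * (μ[Y|G₁]) ω ∂μ - ∫ ω, χ ω * θ ω * (μ[Y|G₀]) ω ∂μ := by
        rw [integral_sub i1 i2, ← e1, ← e2]; simp only [mul_assoc] at e3 ⊢; rw [e3]
      _ = _ := by rw [← integral_sub j1 j2]; congr 1; ext ω; ring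
  rw [key, ← integral_const_mul]
  refine (abs_integral_le_integral_abs).trans (integral_mono_ae ?_ ?_ ?_)
  · refine (j1.sub j2).abs.congr (.of_forall fun ω => ?_)
    simp only [Pi.sub_apply]; congr 1; ring
  · exact ((integrable_condExp.sub integrable_condExp).abs).const_mul _
  · filter_upwards [bd hχ' hθ'] with ω h
    rw [abs_mul]; exact mul_le_mul_of_nonneg_right h (abs_nonneg _)

end Entropy

noncomputable section

/-- The squared Euclidean length of a plane vector. -/
def normSqVec (x : Fin 2 → ℝ) : ℝ := x 0 ^ 2 + x 1 ^ 2

/-- The squared Frobenius norm of a `2 × 2` matrix. -/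
def frobSq (B : Matrix (Fin 2) (Fin 2) ℝ) : ℝ := B 0 0 ^ 2 + B 0 1 ^ 2 + B 1 0 ^ 2 + B 1 1 ^ 2

/-- The reference measure `(1 + |x|²)⁻² dx` on the plane. -/
def planeMeasure : Measure (Fin 2 → ℝ) :=
  volume.withDensity fun x => ENNReal.ofReal (1 / (1 + normSqVec x) ^ 2)

/-- The density of the image of `planeMeasure` under a matrix of determinant one. -/
def relDensity (B : Matrix (Fin 2) (Fin 2) ℝ) (x : Fin 2 → ℝ) : ℝ :=
  ((1 + normSqVec x) / (1 + normSqVec (B.adjugate *ᵥ x))) ^ 2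

end

lemma normSqVec_nonneg (x : Fin 2 → ℝ) : 0 ≤ normSqVec x := by unfold normSqVec; positivity

lemma continuous_normSqVec : Continuous normSqVec := by unfold normSqVec; fun_prop

lemma normSqVec_mulVec_le (B : Matrix (Fin 2) (Fin 2) ℝ) (x : Fin 2 → ℝ) :
    normSqVec (B *ᵥ x) ≤ frobSq B * normSqVec x := by
  simp only [normSqVec, frobSq, mulVec, dotProduct, Fin.sum_univ_two]
  nlinarith [sq_nonneg (B 0 0 * x 1 - B 0 1 * x 0), sq_nonneg (B 1 0 * x 1 - B 1 1 * x 0)]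

lemma frobSq_adjugate (B : Matrix (Fin 2) (Fin 2) ℝ) : frobSq B.adjugate = frobSq B := by
  simp only [adjugate_fin_two, frobSq, of_apply, cons_val_zero, cons_val_one, cons_val', empty_val', cons_val_fin_one]
  ring

lemma one_le_frobSq {B : Matrix (Fin 2) (Fin 2) ℝ} (hB : B.det = 1) : 1 ≤ frobSq B := by
  rw [det_fin_two] at hB
  unfold frobSq
  nlinarith [sq_nonneg (B 0 0 - B 1 1), sq_nonneg (B 0 1 + B 1 0)]

lemma one_add_normSqVec_mulVec_le {B : Matrix (Fin 2) (Fin 2) ℝ} (hB : B.det = 1) (x : Fin 2 → ℝ) :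
    1 + normSqVec (B *ᵥ x) ≤ frobSq B * (1 + normSqVec x) := by
  have := normSqVec_mulVec_le B x
  have := one_le_frobSq hB
  linarith

lemma mulVec_adjugate_mulVec {B : Matrix (Fin 2) (Fin 2) ℝ} (hB : B.det = 1) (x : Fin 2 → ℝ) :
    B *ᵥ (B.adjugate *ᵥ x) = x := by
  rw [mulVec_mulVec, mul_adjugate, hB, one_smul, one_mulVec]

lemma adjugate_mulVec_mulVec {B : Matrix (Fin 2) (Fin 2) ℝ} (hB : B.det = 1) (x : Fin 2 → ℝ) :
    B.adjugate *ᵥ (B *ᵥ x) = x := by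
  rw [mulVec_mulVec, adjugate_mul, hB, one_smul, one_mulVec]

lemma relDensity_pos (B : Matrix (Fin 2) (Fin 2) ℝ) (x : Fin 2 → ℝ) : 0 < relDensity B x := by
  have := normSqVec_nonneg x
  have := normSqVec_nonneg (B.adjugate *ᵥ x)
  unfold relDensity; positivity

lemma relDensity_le {B : Matrix (Fin 2) (Fin 2) ℝ} (hB : B.det = 1) (x : Fin 2 → ℝ) :
    relDensity B x ≤ frobSq B ^ 2 := by
  have h1 := normSqVec_nonneg x
  have h2 := normSqVec_nonneg (B.adjugate *ᵥ x)
  have h := one_add_normSqVec_mulVec_le hB (B.adjugate *ᵥ x)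
  rw [mulVec_adjugate_mulVec hB] at h
  unfold relDensity
  gcongr
  rwa [div_le_iff₀ (by positivity)]

lemma le_relDensity {B : Matrix (Fin 2) (Fin 2) ℝ} (hB : B.det = 1) (x : Fin 2 → ℝ) :
    1 / frobSq B ^ 2 ≤ relDensity B x := by
  have h1 := normSqVec_nonneg x
  have h2 := normSqVec_nonneg (B.adjugate *ᵥ x)
  have h := one_add_normSqVec_mulVec_le (B := B.adjugate) (by simp [det_adjugate, hB]) x
  rw [frobSq_adjugate] at h
  have h3 := one_le_frobSq hB
  unfold relDensity
  rw [← _root_.one_div_pow]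
  refine pow_le_pow_left₀ (by positivity) ?_ 2
  rw [div_le_div_iff₀ (by positivity) (by positivity)]
  linarith

instance : IsFiniteMeasure planeMeasure := by
  have hi : Integrable (fun x : Fin 2 → ℝ => 1 / (1 + normSqVec x) ^ 2) := by
    have h := integrable_rpow_neg_one_add_norm_sq (μ := (volume : Measure (Fin 2 → ℝ))) (r := 4)
      (by simp; norm_num)
    refine h.mono' ?_ (.of_forall fun x => ?_)
    · exact (by have := continuous_normSqVec; measurability : Measurable fun x : Fin 2 → ℝ => 1 / (1 + normSqVec x) ^ 2).aestronglyMeasurable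
    · have h0 := normSqVec_nonneg x
      have h1 : ‖x‖ ^ 2 ≤ normSqVec x := by
        have : ‖x‖ ≤ √(normSqVec x) := by
          rw [pi_norm_le_iff_of_nonneg (by positivity)]
          intro i
          refine Real.le_sqrt_of_sq_le ?_
          unfold normSqVec
          fin_cases i <;> simp <;> positivity
        calc ‖x‖ ^ 2 ≤ √(normSqVec x) ^ 2 := by gcongr
          _ = _ := sq_sqrt h0
      rw [norm_of_nonneg (by positivity)]
      have : (-4 / 2 : ℝ) = -(2 : ℕ) := by norm_num
      rw [this, rpow_neg (by positivity), rpow_natCast, one_div]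
      gcongr
  exact isFiniteMeasure_withDensity_ofReal hi.2

lemma planeMeasure_singleton_zero : planeMeasure {0} = 0 :=
  withDensity_absolutelyContinuous _ _ (by simp)

lemma planeMeasure_univ_pos : 0 < planeMeasure.real univ := by
  rw [measureReal_def, ENNReal.toReal_pos_iff]
  refine ⟨?_, measure_lt_top _ _⟩
  rw [pos_iff_ne_zero, Measure.measure_univ_ne_zero]
  intro h
  have : (volume : Measure (Fin 2 → ℝ)) ≪ planeMeasure := by
    refine withDensity_absolutelyContinuous' ?_ (.of_forall fun x => ?_)
    · have := continuous_normSqVec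
      have : Measurable fun x : Fin 2 → ℝ => 1 / (1 + normSqVec x) ^ 2 := by measurability
      exact this.ennreal_ofReal.aemeasurable
    · have := normSqVec_nonneg x
      simp only [ne_eq, ENNReal.ofReal_eq_zero, not_le]
      positivity
  rw [h] at this
  have h2 := this (show (0 : Measure (Fin 2 → ℝ)) univ = 0 by simp)
  simp at h2

lemma measurable_relDensity (B : Matrix (Fin 2) (Fin 2) ℝ) : Measurable (relDensity B) := by
  unfold relDensity normSqVec
  simp only [mulVec, dotProduct, Fin.sum_univ_two]
  fun_prop

lemma integral_planeMeasure (f : (Fin 2 → ℝ) → ℝ) :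
    ∫ x, f x ∂planeMeasure = ∫ x, 1 / (1 + normSqVec x) ^ 2 * f x := by
  unfold planeMeasure
  have hm : Measurable fun x : Fin 2 → ℝ => 1 / (1 + normSqVec x) ^ 2 := by
    have := continuous_normSqVec; measurability
  rw [integral_withDensity_eq_integral_toReal_smul hm.ennreal_ofReal (by simp)]
  refine integral_congr_ae (.of_forall fun x => ?_)
  have := normSqVec_nonneg x
  simp only [smul_eq_mul]
  rw [ENNReal.toReal_ofReal (by positivity)]

lemma measurePreserving_mulVec {B : Matrix (Fin 2) (Fin 2) ℝ} (hB : B.det = 1) :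
    MeasurePreserving (fun x : Fin 2 → ℝ => B *ᵥ x) volume volume := by
  refine ⟨(toLin' B).continuous_of_finiteDimensional.measurable, ?_⟩
  have := Real.map_matrix_volume_pi_eq_smul_volume_pi (M := B) (by rw [hB]; exact one_ne_zero)
  rw [hB] at this
  simp only [inv_one, abs_one, ENNReal.ofReal_one, one_smul] at this
  exact this

/-- Change of variables for `planeMeasure`. -/
lemma integral_mulVec_planeMeasure {B : Matrix (Fin 2) (Fin 2) ℝ} (hB : B.det = 1)
    {f : (Fin 2 → ℝ) → ℝ} (hf : Measurable f) :
    ∫ x, f (B *ᵥ x) ∂planeMeasure = ∫ x, f x * relDensity B x ∂planeMeasure := by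
  have hm : Measurable fun x : Fin 2 → ℝ =>
      1 / (1 + normSqVec x) ^ 2 * (f x * relDensity B x) := by
    have := continuous_normSqVec.measurable
    have := measurable_relDensity B
    fun_prop
  have hmp := measurePreserving_mulVec hB
  have key := integral_map (μ := volume) hmp.measurable.aemeasurable hm.aestronglyMeasurable
  rw [hmp.map_eq] at key
  rw [integral_planeMeasure, integral_planeMeasure, key]
  congr 1; ext x
  have := normSqVec_nonneg x
  have := normSqVec_nonneg (B *ᵥ x)
  rw [relDensity, adjugate_mulVec_mulVec hB]
  field_simp

lemma integral_relDensity {B : Matrix (Fin 2) (Fin 2) ℝ} (hB : B.det = 1) :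
    ∫ x, relDensity B x ∂planeMeasure = planeMeasure.real univ := by
  have := integral_mulVec_planeMeasure hB (f := fun _ => 1) measurable_const
  simpa using this.symm

noncomputable section

/-- The product of the matrices `M (ω i) (ω (i+1))` along the word `ω s, …, ω (s+n)`. -/
def pathProd (M : ℕ → ℕ → Matrix (Fin 2) (Fin 2) ℝ) (ω : ℤ → ℕ) (s : ℤ) :
    ℕ → Matrix (Fin 2) (Fin 2) ℝ
  | 0 => 1
  | n + 1 => M (ω (s + n)) (ω (s + n + 1)) * pathProd M ω s n

/-- The σ-algebra generated by the coordinates `ω u`, `u ≥ s`. -/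
@[reducible] def futureAlg (s : ℤ) : MeasurableSpace (ℤ → ℕ) :=
  MeasurableSpace.comap (fun ω (i : ℕ) => ω (s + i)) inferInstance

end

section PathProd

variable {M : ℕ → ℕ → Matrix (Fin 2) (Fin 2) ℝ}

lemma shift_iterate_apply (t : ℕ) (ω : ℤ → ℕ) (u : ℤ) : (shift^[t] ω) u = ω (u + t) := by
  induction t generalizing ω with
  | zero => simp
  | succ t ih => rw [Function.iterate_succ_apply, ih]; simp only [shift]; push_cast; congr 1; ring

lemma pathProd_shift_iterate (t : ℕ) (ω : ℤ → ℕ) (s : ℤ) (n : ℕ) :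
    pathProd M (shift^[t] ω) s n = pathProd M ω (s + t) n := by
  induction n with
  | zero => rfl
  | succ n ih =>
    rw [pathProd, pathProd, ih, shift_iterate_apply, shift_iterate_apply]
    congr 3 <;> ring

lemma pathProd_add (ω : ℤ → ℕ) (s : ℤ) (m n : ℕ) :
    pathProd M ω s (m + n) = pathProd M ω (s + m) n * pathProd M ω s m := by
  induction n with
  | zero => simp [pathProd]
  | succ n ih =>
    rw [← add_assoc, pathProd, ih, pathProd, Matrix.mul_assoc]
    push_cast
    simp only [add_assoc]

lemma det_pathProd (hM : ∀ a b, (M a b).det = 1) (ω : ℤ → ℕ) (s : ℤ) (n : ℕ) :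
    (pathProd M ω s n).det = 1 := by
  induction n with
  | zero => simp [pathProd]
  | succ n ih => rw [pathProd, det_mul, ih, hM, one_mul]

lemma frobSq_mul_le (A B : Matrix (Fin 2) (Fin 2) ℝ) : frobSq (A * B) ≤ frobSq A * frobSq B := by
  simp only [frobSq, Matrix.mul_apply, Fin.sum_univ_two]
  nlinarith [sq_nonneg (A 0 0 * B 1 0 - A 0 1 * B 0 0), sq_nonneg (A 0 0 * B 1 1 - A 0 1 * B 0 1),
    sq_nonneg (A 1 0 * B 1 0 - A 1 1 * B 0 0), sq_nonneg (A 1 0 * B 1 1 - A 1 1 * B 0 1)]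

lemma frobSq_nonneg (A : Matrix (Fin 2) (Fin 2) ℝ) : 0 ≤ frobSq A := by
  unfold frobSq; positivity

lemma frobSq_pathProd_le {F : ℝ} (hF : ∀ a b, frobSq (M a b) ≤ F) (ω : ℤ → ℕ) (s : ℤ) (n : ℕ) :
    frobSq (pathProd M ω s n) ≤ 2 * F ^ n := by
  induction n with
  | zero => simp [pathProd, frobSq]; norm_num
  | succ n ih =>
    rw [pathProd]
    have h0 : 0 ≤ F := (frobSq_nonneg _).trans (hF 0 0)
    calc _ ≤ frobSq (M (ω (s + n)) (ω (s + n + 1))) * frobSq (pathProd M ω s n) := frobSq_mul_le _ _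
      _ ≤ F * (2 * F ^ n) := mul_le_mul (hF _ _) ih (frobSq_nonneg _) h0
      _ = _ := by ring

lemma measurable_coord_futureAlg {s u : ℤ} (h : s ≤ u) :
    Measurable[futureAlg s] (fun ω : ℤ → ℕ => ω u) := by
  have h1 : Measurable[futureAlg s] (fun (ω : ℤ → ℕ) (i : ℕ) => ω (s + i)) := comap_measurable _
  have h2 := (measurable_pi_apply (X := fun _ : ℕ => ℕ) (u - s).toNat).comp h1
  convert h2 using 2
  simp only [Function.comp]
  congr 1; omega

lemma measurable_restr (s : ℤ) : Measurable (fun (ω : ℤ → ℕ) (i : ℕ) => ω (s + i)) :=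
  measurable_pi_lambda _ fun _ => measurable_pi_apply _

lemma futureAlg_le (s : ℤ) : futureAlg s ≤ (inferInstance : MeasurableSpace (ℤ → ℕ)) :=
  (measurable_restr s).comap_le

lemma futureAlg_anti {s s' : ℤ} (h : s ≤ s') : futureAlg s' ≤ futureAlg s := by
  have : Measurable[futureAlg s] (fun (ω : ℤ → ℕ) (i : ℕ) => ω (s' + i)) :=
    @measurable_pi_lambda _ _ _ (futureAlg s) _ _ fun i => measurable_coord_futureAlg (by omega)
  exact this.comap_le

lemma measurable_shift_iterate_futureAlg (s : ℤ) (t : ℕ) :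
    Measurable[futureAlg (s + t), futureAlg s] (shift^[t]) := by
  rw [futureAlg, futureAlg, measurable_comap_iff]
  convert comap_measurable (m := inferInstance) (fun (ω : ℤ → ℕ) (i : ℕ) => ω (s + t + i)) using 1
  ext ω i
  simp only [Function.comp, shift_iterate_apply]
  congr 1; ring

lemma measurable_pathProd_apply {m : MeasurableSpace (ℤ → ℕ)} {s : ℤ}
    (hm : ∀ u, s ≤ u → Measurable[m] (fun ω : ℤ → ℕ => ω u)) (n : ℕ) (i j : Fin 2) :
    Measurable[m] (fun ω => pathProd M ω s n i j) := by
  induction n generalizing i j with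
  | zero => exact measurable_const
  | succ n ih =>
    simp only [pathProd, Matrix.mul_apply, Fin.sum_univ_two]
    have h : ∀ i j, Measurable[m] (fun ω : ℤ → ℕ => M (ω (s + n)) (ω (s + n + 1)) i j) := fun i j =>
      (measurable_from_prod_countable_right (f := fun p : ℕ × ℕ => M p.1 p.2 i j)
        (fun _ => measurable_from_top)).comp ((hm _ (by omega)).prodMk (hm _ (by omega)))
    exact ((h i 0).mul (ih 0 j)).add ((h i 1).mul (ih 1 j))

lemma measurable_mulVec {α : Type*} {m : MeasurableSpace α} {P : α → Matrix (Fin 2) (Fin 2) ℝ}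
    (hP : ∀ i j, Measurable fun a => P a i j) {x : α → Fin 2 → ℝ} (hx : Measurable x) :
    Measurable fun a => P a *ᵥ x a := by
  refine measurable_pi_lambda _ fun i => ?_
  simp only [mulVec, dotProduct, Fin.sum_univ_two]
  have h := fun i => (measurable_pi_apply i).comp hx
  exact ((hP i 0).mul (h 0)).add ((hP i 1).mul (h 1))

lemma measurable_adjugate_apply {α : Type*} {m : MeasurableSpace α}
    {P : α → Matrix (Fin 2) (Fin 2) ℝ} (hP : ∀ i j, Measurable fun a => P a i j) (i j : Fin 2) :
    Measurable fun a => (P a).adjugate i j := by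
  simp only [adjugate_fin_two]
  fin_cases i <;> fin_cases j <;> simp <;> exact hP _ _

lemma measurable_relDensity_comp {α : Type*} {m : MeasurableSpace α}
    {P : α → Matrix (Fin 2) (Fin 2) ℝ} (hP : ∀ i j, Measurable fun a => P a i j)
    {x : α → Fin 2 → ℝ} (hx : Measurable x) : Measurable fun a => relDensity (P a) (x a) := by
  unfold relDensity
  have h1 := continuous_normSqVec.measurable.comp hx
  have h2 := continuous_normSqVec.measurable.comp
    (measurable_mulVec (measurable_adjugate_apply hP) hx)
  exact ((measurable_const.add h1).div (measurable_const.add h2)).pow_const 2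

lemma measurable_frobSq_comp {α : Type*} {m : MeasurableSpace α}
    {P : α → Matrix (Fin 2) (Fin 2) ℝ} (hP : ∀ i j, Measurable fun a => P a i j) :
    Measurable fun a => frobSq (P a) := by
  unfold frobSq
  exact ((((hP 0 0).pow_const 2).add ((hP 0 1).pow_const 2)).add ((hP 1 0).pow_const 2)).add
    ((hP 1 1).pow_const 2)

end PathProd

section Correlation

variable {M : ℕ → ℕ → Matrix (Fin 2) (Fin 2) ℝ} {μ : Measure (ℤ → ℕ)}

lemma integral_comp_of_measurePreserving {α β : Type*} [MeasurableSpace α] [MeasurableSpace β]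
    {ν : Measure α} {ρ : Measure β} {T : α → β} (hT : MeasurePreserving T ν ρ) {f : β → ℝ}
    (hf : AEStronglyMeasurable f ρ) : ∫ a, f (T a) ∂ν = ∫ b, f b ∂ρ := by
  have h := hT.map_eq
  subst h
  exact (integral_map hT.measurable.aemeasurable hf).symm

variable [IsProbabilityMeasure μ]

lemma integral_condExp_shift_mul (hμ : MeasurePreserving shift μ μ) {χ : (ℤ → ℕ) → ℝ}
    (hχi : Integrable χ μ) (t : ℕ) {Z : (ℤ → ℕ) → ℝ} (hZ : StronglyMeasurable[futureAlg t] Z)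
    (hb : ∃ B, ∀ᵐ ω ∂μ, |Z ω| ≤ B) :
    ∫ ω, (μ[χ|futureAlg 0]) (shift^[t] ω) * Z ω ∂μ = ∫ ω, χ (shift^[t] ω) * Z ω ∂μ := by
  obtain ⟨B, hB⟩ := hb
  obtain ⟨h, hh, rfl⟩ := hZ.measurable.exists_eq_measurable_comp
  have hT := hμ.iterate t
  set Z₀ : (ℤ → ℕ) → ℝ := fun ω => h (fun i : ℕ => ω (0 + i)) with hZ₀
  have e : ∀ ω : ℤ → ℕ, (h ∘ fun (ω : ℤ → ℕ) (i : ℕ) => ω (t + i)) ω = Z₀ (shift^[t] ω) := by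
    intro ω
    simp only [hZ₀, shift_iterate_apply, Function.comp]
    congr 1; ext i; congr 1; ring
  have hZ₀m : StronglyMeasurable[futureAlg 0] Z₀ := by
    apply Measurable.stronglyMeasurable
    exact hh.comp (comap_measurable _)
  have hZ₀m' := hZ₀m.mono (futureAlg_le 0)
  have hZ₀b : ∀ᵐ ω ∂μ, |Z₀ ω| ≤ B := by
    simp_rw [e] at hB
    rw [← hT.map_eq, ae_map_iff hT.measurable.aemeasurable]
    · exact hB
    · exact measurableSet_le hZ₀m'.measurable.abs measurable_const
  simp_rw [e]
  rw [integral_comp_of_measurePreserving hT (f := fun ω => (μ[χ|futureAlg 0]) ω * Z₀ ω),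
    integral_comp_of_measurePreserving hT (f := fun ω => χ ω * Z₀ ω)]
  · have := integral_mul_condExp_of_bound (futureAlg_le 0) hZ₀m.aestronglyMeasurable hZ₀b hχi
    simpa only [mul_comm] using this
  · exact hχi.1.mul hZ₀m'.aestronglyMeasurable
  · exact integrable_condExp.1.mul hZ₀m'.aestronglyMeasurable

variable {F K D ε : ℝ} {χ : (ℤ → ℕ) → ℝ} {φ : (Fin 2 → ℝ) → ℝ}

/-- The correlation of a martingale increment with the image of a fixed vector. -/
lemma sum_abs_integral_relDensity_le (hμ : MeasurePreserving shift μ μ)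
    (hM : ∀ a b, (M a b).det = 1) (hF : ∀ a b, frobSq (M a b) ≤ F) (hF0 : 1 ≤ F)
    (hφ : Measurable φ) (hD : ∀ x, |φ x| ≤ D) {r : ℕ}
    (hχ : StronglyMeasurable[futureAlg (-r)] χ) (hK : ∀ ω, |χ ω| ≤ K) (hε : 0 < ε) (n : ℕ)
    (x : Fin 2 → ℝ) :
    ∑ t ∈ Finset.range n, |∫ ω, (χ (shift^[t] ω) - (μ[χ|futureAlg 0]) (shift^[t] ω)) *
      (φ ((pathProd M ω t (n - t)).adjugate *ᵥ x) * relDensity (pathProd M ω 0 n) x) ∂μ| ≤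
    K * D * (r * (1 / (2 * ε) * (∫ ω, relDensity (pathProd M ω 0 n) x *
        (2 * log (frobSq (pathProd M ω 0 n))) ∂μ - ∫ ω, relDensity (pathProd M ω 0 n) x ∂μ + 1)
      + 2 * ε * ((n + r : ℕ) : ℝ) * ∫ ω, relDensity (pathProd M ω 0 n) x ∂μ)) := by
  have hK0 : 0 ≤ K := (abs_nonneg _).trans (hK fun _ => 0)
  have hD0 : 0 ≤ D := (abs_nonneg _).trans (hD 0)
  set Y : (ℤ → ℕ) → ℝ := fun ω => relDensity (pathProd M ω 0 n) x with hY
  set C : ℝ := 2 * F ^ n with hC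
  have hCpos : 0 < C := by positivity
  have hP : ∀ i j, Measurable fun ω => pathProd M ω 0 n i j := fun i j =>
    measurable_pathProd_apply (fun u _ => measurable_pi_apply u) n i j
  have hYm : Measurable Y := measurable_relDensity_comp hP measurable_const
  have hYC : ∀ ω, Y ω ∈ Icc (1 / C ^ 2) (C ^ 2) := fun ω => by
    have h1 := frobSq_pathProd_le hF ω 0 n
    have h2 := one_le_frobSq (det_pathProd hM ω 0 n)
    refine ⟨le_trans ?_ (le_relDensity (det_pathProd hM ω 0 n) x),
      (relDensity_le (det_pathProd hM ω 0 n) x).trans ?_⟩ <;> gcongr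
  have hYabs : ∀ ω, |Y ω| ≤ C ^ 2 := fun ω => by
    rw [abs_of_pos (relDensity_pos _ _)]; exact (hYC ω).2
  have hYi : Integrable Y μ := .of_bound hYm.aestronglyMeasurable (C ^ 2) (.of_forall hYabs)
  set G : ℕ → MeasurableSpace (ℤ → ℕ) := fun q => futureAlg (n - q) with hG
  have hGm : ∀ q, G q ≤ MeasurableSpace.pi := fun q => futureAlg_le _
  have hGmono : Monotone G := fun a b h => futureAlg_anti (by omega)
  set d : ℕ → ℝ := fun q => ∫ ω, |(μ[Y|G (q + 1)]) ω - (μ[Y|G q]) ω| ∂μ with hd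
  have hd0 : ∀ q, 0 ≤ d q := fun q => integral_nonneg fun _ => abs_nonneg _
  have hχi : Integrable χ μ :=
    .of_bound (hχ.mono (futureAlg_le _)).aestronglyMeasurable K (.of_forall hK)
  have step : ∀ t ∈ Finset.range n,
      |∫ ω, (χ (shift^[t] ω) - (μ[χ|futureAlg 0]) (shift^[t] ω)) *
        (φ ((pathProd M ω t (n - t)).adjugate *ᵥ x) * Y ω) ∂μ| ≤
      K * D * ∑ i ∈ Finset.range r, d (n - t + i) := by
    intro t ht
    have ht' : t < n := Finset.mem_range.1 ht
    have e0 : G (n - t) = futureAlg t := by simp only [hG]; congr 1; omega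
    have e1 : G (n - t + r) = futureAlg (-r + t) := by simp only [hG]; congr 1; omega
    refine (abs_integral_sub_mul_le (μ := μ) (hGm (n - t)) (hGm (n - t + r))
      (hGmono (Nat.le_add_right _ _)) (χ := fun ω => χ (shift^[t] ω))
      (ξ := fun ω => (μ[χ|futureAlg 0]) (shift^[t] ω)) (K := K) (D := D) hYi (.of_forall hYabs)
      ?_ (fun _ => hK _) ?_ ?_ ?_ (fun _ => hD _) ?_).trans ?_
    · rw [e1]; exact hχ.comp_measurable (measurable_shift_iterate_futureAlg _ t)
    · rw [e0]
      have h := measurable_shift_iterate_futureAlg 0 t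
      rw [zero_add] at h
      exact stronglyMeasurable_condExp.comp_measurable h
    · have h := condExp_mem_Icc (μ := μ) (futureAlg_le 0) hχi
        (.of_forall fun ω => abs_le.1 (hK ω))
      filter_upwards [(hμ.iterate t).quasiMeasurePreserving.ae h] with ω h' using abs_le.2 h'
    · rw [e0]
      apply Measurable.stronglyMeasurable
      exact hφ.comp (measurable_mulVec (measurable_adjugate_apply
        (measurable_pathProd_apply (fun u hu => measurable_coord_futureAlg hu) _)) measurable_const)
    · rw [e0]
      exact fun Z hZ hb => integral_condExp_shift_mul hμ hχi t hZ hb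
    · gcongr
      have tel : ∀ m, ∫ ω, |(μ[Y|G (n - t + m)]) ω - (μ[Y|G (n - t)]) ω| ∂μ ≤
          ∑ i ∈ Finset.range m, d (n - t + i) := by
        intro m
        induction m with
        | zero => simp
        | succ m ih =>
          rw [Finset.sum_range_succ]
          refine le_trans ?_ (add_le_add_left ih _)
          rw [← integral_add]
          · refine integral_mono ?_ ?_ fun ω => ?_
            · exact (integrable_condExp.sub integrable_condExp).abs
            · exact ((integrable_condExp.sub integrable_condExp).abs).add
                ((integrable_condExp.sub integrable_condExp).abs)
            · have := abs_sub_le ((μ[Y|G (n - t + (m + 1))]) ω) ((μ[Y|G (n - t + m)]) ω)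
                ((μ[Y|G (n - t)]) ω)
              simp only
              rw [← add_assoc] at this ⊢
              linarith
          · exact (integrable_condExp.sub integrable_condExp).abs
          · exact (integrable_condExp.sub integrable_condExp).abs
      exact tel r
  refine (Finset.sum_le_sum step).trans ?_
  rw [← Finset.mul_sum, Finset.sum_comm]
  refine mul_le_mul_of_nonneg_left ?_ (by positivity)
  have hsum := sum_integral_abs_condExp_sub_le (μ := μ) hGm hGmono (c := 1 / C ^ 2) (C := C ^ 2)
    (by positivity) hε hYi (.of_forall hYC) (n + r)
  have hent : ∫ ω, Y ω * log (Y ω) ∂μ ≤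
      ∫ ω, Y ω * (2 * log (frobSq (pathProd M ω 0 n))) ∂μ := by
    have hlog : ∀ ω, Y ω * log (Y ω) ≤ Y ω * (2 * log (frobSq (pathProd M ω 0 n))) := fun ω => by
      have h := log_le_log (relDensity_pos _ _) (relDensity_le (det_pathProd hM ω 0 n) x)
      rw [log_pow] at h
      exact mul_le_mul_of_nonneg_left (by exact_mod_cast h) (relDensity_pos _ _).le
    refine integral_mono ?_ ?_ hlog
    · refine hYi.mul_bdd (c := max |log (1 / C ^ 2)| |log (C ^ 2)|)
        hYm.log.aestronglyMeasurable (.of_forall fun ω => ?_)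
      exact abs_le_max_abs_abs (log_le_log (by positivity) (hYC ω).1)
        (log_le_log (relDensity_pos _ _) (hYC ω).2)
    · refine hYi.mul_bdd (c := 2 * log C)
        ((measurable_frobSq_comp hP).log.const_mul 2).aestronglyMeasurable (.of_forall fun ω => ?_)
      have h2 := one_le_frobSq (det_pathProd hM ω 0 n)
      rw [norm_of_nonneg (by have := log_nonneg h2; positivity)]
      gcongr
      exact frobSq_pathProd_le hF ω 0 n
  have hi : ∀ i ∈ Finset.range r, ∑ t ∈ Finset.range n, d (n - t + i) ≤
      ∑ q ∈ Finset.range (n + r), d q := by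
    intro i hi
    have hi' := Finset.mem_range.1 hi
    rw [← Finset.sum_image (f := d) (g := fun t => n - t + i)]
    · refine Finset.sum_le_sum_of_subset_of_nonneg ?_ fun q _ _ => hd0 q
      intro q hq
      simp only [Finset.mem_image, Finset.mem_range] at hq ⊢
      omega
    · intro a ha b hb hab
      simp only [Finset.coe_range, mem_Iio] at ha hb
      simp only at hab
      omega
  refine (Finset.sum_le_sum hi).trans ?_
  rw [Finset.sum_const, Finset.card_range, nsmul_eq_mul]
  refine mul_le_mul_of_nonneg_left (hsum.trans ?_) (by positivity)
  gcongr

end Correlation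

section Correlation

variable {M : ℕ → ℕ → Matrix (Fin 2) (Fin 2) ℝ} {μ : Measure (ℤ → ℕ)}

lemma measurable_integral_pathProd {φ : (Fin 2 → ℝ) → ℝ} (hφ : Measurable φ)
    {m : MeasurableSpace (ℤ → ℕ)} {s : ℤ} {t : ℕ}
    (hm : ∀ i j, Measurable[m] fun ω => pathProd M ω s t i j) :
    StronglyMeasurable[m] fun ω => ∫ x, φ (pathProd M ω s t *ᵥ x) ∂planeMeasure := by
  have h : Measurable fun p : (ℤ → ℕ) × (Fin 2 → ℝ) => φ (pathProd M p.1 s t *ᵥ p.2) :=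
    hφ.comp (measurable_mulVec (P := fun p : (ℤ → ℕ) × (Fin 2 → ℝ) => pathProd M p.1 s t)
      (fun i j => (hm i j).comp measurable_fst) measurable_snd)
  exact h.stronglyMeasurable.integral_prod_right'

lemma abs_integral_planeMeasure_le {f : (Fin 2 → ℝ) → ℝ} {D : ℝ} (hD : ∀ x, |f x| ≤ D) :
    |∫ x, f x ∂planeMeasure| ≤ D * planeMeasure.real univ :=
  norm_integral_le_of_norm_le_const (μ := planeMeasure) (f := f) (.of_forall hD)

variable [IsProbabilityMeasure μ]

variable {F K D ε : ℝ} {χ : (ℤ → ℕ) → ℝ} {φ : (Fin 2 → ℝ) → ℝ}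

lemma sum_abs_integral_pathProd_le (hμ : MeasurePreserving shift μ μ)
    (hM : ∀ a b, (M a b).det = 1) (hF : ∀ a b, frobSq (M a b) ≤ F) (hF0 : 1 ≤ F)
    (hφ : Measurable φ) (hD : ∀ x, |φ x| ≤ D) {r : ℕ}
    (hχ : StronglyMeasurable[futureAlg (-r)] χ) (hK : ∀ ω, |χ ω| ≤ K) (hε : 0 < ε) (n : ℕ) :
    ∑ t ∈ Finset.range n, |∫ ω, (χ ω - (μ[χ|futureAlg 0]) ω) *
      ∫ x, φ (pathProd M ω (-t) t *ᵥ x) ∂planeMeasure ∂μ| ≤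
    K * D * planeMeasure.real univ * r *
      (1 / ε * ∫ ω, log (frobSq (pathProd M ω 0 n)) ∂μ + 2 * ε * (n + r)) := by
  set γ := planeMeasure with hγ
  set C : ℝ := 2 * F ^ n with hC
  have hCpos : 0 < C := by positivity
  have hχi : Integrable χ μ :=
    .of_bound (hχ.mono (futureAlg_le _)).aestronglyMeasurable K (.of_forall hK)
  have hΔi : Integrable (fun ω => χ ω - (μ[χ|futureAlg 0]) ω) μ := hχi.sub integrable_condExp
  have hPm : ∀ (s : ℤ) (m : ℕ) i j, Measurable fun ω => pathProd M ω s m i j := fun s m i j =>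
    measurable_pathProd_apply (fun u _ => measurable_pi_apply u) m i j
  have hPm2 : ∀ (s : ℤ) (m : ℕ) i j,
      Measurable fun p : (ℤ → ℕ) × (Fin 2 → ℝ) => pathProd M p.1 s m i j := fun s m i j =>
    (hPm s m i j).comp measurable_fst
  have hYm : Measurable fun p : (ℤ → ℕ) × (Fin 2 → ℝ) => relDensity (pathProd M p.1 0 n) p.2 :=
    measurable_relDensity_comp (P := fun p : (ℤ → ℕ) × (Fin 2 → ℝ) => pathProd M p.1 0 n)
      (hPm2 _ _) measurable_snd
  have hYC : ∀ ω x, |relDensity (pathProd M ω 0 n) x| ≤ C ^ 2 := fun ω x => by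
    rw [abs_of_pos (relDensity_pos _ _)]
    have h1 := frobSq_pathProd_le hF ω 0 n
    have h2 := one_le_frobSq (det_pathProd hM ω 0 n)
    refine (relDensity_le (det_pathProd hM ω 0 n) x).trans ?_
    gcongr
  set J : ℕ → (Fin 2 → ℝ) → ℝ := fun t x =>
    ∫ ω, (χ (shift^[t] ω) - (μ[χ|futureAlg 0]) (shift^[t] ω)) *
      (φ ((pathProd M ω t (n - t)).adjugate *ᵥ x) * relDensity (pathProd M ω 0 n) x) ∂μ with hJ
  have hInt : ∀ t, Integrable (fun p : (ℤ → ℕ) × (Fin 2 → ℝ) =>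
      (χ (shift^[t] p.1) - (μ[χ|futureAlg 0]) (shift^[t] p.1)) *
      (φ ((pathProd M p.1 t (n - t)).adjugate *ᵥ p.2) * relDensity (pathProd M p.1 0 n) p.2))
      (μ.prod γ) := fun t => by
    have h1 := (((hμ.iterate t).integrable_comp_of_integrable hΔi).comp_fst γ)
    refine h1.mul_bdd (c := D * C ^ 2) ?_ (.of_forall fun p => ?_)
    · refine ((hφ.comp ?_).mul hYm).aestronglyMeasurable
      exact measurable_mulVec (P := fun p : (ℤ → ℕ) × (Fin 2 → ℝ) =>
        (pathProd M p.1 t (n - t)).adjugate) (measurable_adjugate_apply (hPm2 _ _)) measurable_snd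
    · rw [norm_mul]
      exact mul_le_mul (hD _) (hYC _ _) (norm_nonneg _) ((abs_nonneg _).trans (hD 0))
  have hterm : ∀ t ∈ Finset.range n, ∫ ω, (χ ω - (μ[χ|futureAlg 0]) ω) *
      ∫ x, φ (pathProd M ω (-t) t *ᵥ x) ∂γ ∂μ = ∫ x, J t x ∂γ := by
    intro t ht
    have ht' := Finset.mem_range.1 ht
    rw [← integral_comp_of_measurePreserving (hμ.iterate t)
      (f := fun ω => (χ ω - (μ[χ|futureAlg 0]) ω) * ∫ x, φ (pathProd M ω (-t) t *ᵥ x) ∂γ)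
      (hΔi.1.mul (measurable_integral_pathProd hφ (hPm _ _)).aestronglyMeasurable)]
    simp only [hJ]
    rw [← integral_integral_swap (hInt t)]
    refine integral_congr_ae (.of_forall fun ω => ?_)
    simp only [pathProd_shift_iterate, neg_add_cancel]
    rw [integral_const_mul]
    congr 1
    have hdet := det_pathProd hM ω t (n - t)
    have hsplit : pathProd M ω 0 n = pathProd M ω t (n - t) * pathProd M ω 0 t := by
      have := pathProd_add (M := M) ω 0 t (n - t)
      rwa [Nat.add_sub_cancel' ht'.le, zero_add] at this
    rw [← integral_mulVec_planeMeasure (det_pathProd hM ω 0 n)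
      (f := fun x => φ ((pathProd M ω t (n - t)).adjugate *ᵥ x))]
    · refine integral_congr_ae (.of_forall fun x => ?_)
      simp only
      rw [hsplit, ← mulVec_mulVec, adjugate_mulVec_mulVec hdet]
    · exact hφ.comp (measurable_mulVec (P := fun _ => (pathProd M ω t (n - t)).adjugate)
        (fun _ _ => measurable_const) measurable_id)
  have hJi : ∀ t, Integrable (J t) γ := fun t => (hInt t).integral_prod_right
  have hYi : Integrable (fun p : (ℤ → ℕ) × (Fin 2 → ℝ) => relDensity (pathProd M p.1 0 n) p.2)
      (μ.prod γ) := .of_bound hYm.aestronglyMeasurable (C ^ 2) (.of_forall fun p => hYC _ _)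
  have hYL : Integrable (fun p : (ℤ → ℕ) × (Fin 2 → ℝ) => relDensity (pathProd M p.1 0 n) p.2 *
      (2 * log (frobSq (pathProd M p.1 0 n)))) (μ.prod γ) := by
    refine hYi.mul_bdd (c := 2 * log C)
      ((measurable_frobSq_comp (hPm2 _ _)).log.const_mul 2).aestronglyMeasurable
      (.of_forall fun p => ?_)
    have h2 := one_le_frobSq (det_pathProd hM p.1 0 n)
    rw [norm_of_nonneg (by have := log_nonneg h2; positivity)]
    gcongr
    exact frobSq_pathProd_le hF p.1 0 n
  have e1 : ∫ x, ∫ ω, relDensity (pathProd M ω 0 n) x ∂μ ∂γ = γ.real univ := by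
    rw [← integral_integral_swap hYi]
    simp [integral_relDensity (det_pathProd hM _ 0 n), hγ]
  have e2 : ∫ x, ∫ ω, relDensity (pathProd M ω 0 n) x *
      (2 * log (frobSq (pathProd M ω 0 n))) ∂μ ∂γ =
      γ.real univ * (2 * ∫ ω, log (frobSq (pathProd M ω 0 n)) ∂μ) := by
    rw [← integral_integral_swap hYL]
    simp_rw [integral_mul_const]
    simp only [integral_relDensity (det_pathProd hM _ 0 n), hγ, integral_const_mul]
  have i1 := hYi.integral_prod_right
  have i2 := hYL.integral_prod_right
  calc _ = ∑ t ∈ Finset.range n, |∫ x, J t x ∂γ| :=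
        Finset.sum_congr rfl fun t ht => by rw [hterm t ht]
    _ ≤ ∑ t ∈ Finset.range n, ∫ x, |J t x| ∂γ :=
        Finset.sum_le_sum fun t _ => abs_integral_le_integral_abs
    _ = ∫ x, ∑ t ∈ Finset.range n, |J t x| ∂γ :=
        (integral_finsetSum _ fun t _ => (hJi t).abs).symm
    _ ≤ ∫ x, K * D * (r * (1 / (2 * ε) * (∫ ω, relDensity (pathProd M ω 0 n) x *
        (2 * log (frobSq (pathProd M ω 0 n))) ∂μ - ∫ ω, relDensity (pathProd M ω 0 n) x ∂μ + 1)
      + 2 * ε * ((n + r : ℕ) : ℝ) * ∫ ω, relDensity (pathProd M ω 0 n) x ∂μ)) ∂γ := by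
        refine integral_mono (integrable_finsetSum _ fun t _ => (hJi t).abs) ?_ fun x =>
          sum_abs_integral_relDensity_le hμ hM hF hF0 hφ hD hχ hK hε n x
        exact (((((i2.sub i1).add (integrable_const 1)).const_mul _).add
          (i1.const_mul _)).const_mul _).const_mul _
    _ = _ := by
        rw [integral_const_mul, integral_const_mul, integral_add, integral_const_mul, integral_add,
          integral_sub i2 i1, integral_const_mul, e1, e2, integral_const]
        · simp only [smul_eq_mul, mul_one]
          push_cast
          field_simp
          ring
        · exact i2.sub i1
        · exact integrable_const 1
        · exact ((i2.sub i1).add (integrable_const 1)).const_mul _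
        · exact i1.const_mul _

/-- Cesàro averages of the image of `planeMeasure` under the products along the past. -/
noncomputable def pastAvg (M : ℕ → ℕ → Matrix (Fin 2) (Fin 2) ℝ) (φ : (Fin 2 → ℝ) → ℝ) (n : ℕ)
    (ω : ℤ → ℕ) : ℝ :=
  (1 / n) * ∑ t ∈ Finset.range n, ∫ x, φ (pathProd M ω (-t) t *ᵥ x) ∂planeMeasure

lemma measurable_pastAvg (hφ : Measurable φ) {m : MeasurableSpace (ℤ → ℕ)}
    (hm : ∀ u ≤ 0, Measurable[m] (fun ω : ℤ → ℕ => ω u)) (n : ℕ) :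
    Measurable[m] (pastAvg M φ n) := by
  unfold pastAvg
  refine Measurable.const_mul (Finset.measurable_fun_sum _ fun t _ =>
    (measurable_integral_pathProd hφ fun i j => ?_).measurable) _
  have key : ∀ (n : ℕ) (s : ℤ), s + n ≤ 0 →
      ∀ i j, Measurable[m] fun ω => pathProd M ω s n i j := by
    intro n
    induction n with
    | zero => exact fun _ _ _ _ => measurable_const
    | succ n ih =>
      intro s hs i j
      simp only [pathProd, Matrix.mul_apply, Fin.sum_univ_two]
      push_cast at hs
      have h : ∀ i j, Measurable[m] (fun ω : ℤ → ℕ => M (ω (s + n)) (ω (s + n + 1)) i j) :=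
        fun i j => (measurable_from_prod_countable_right (f := fun p : ℕ × ℕ => M p.1 p.2 i j)
          (fun _ => measurable_from_top)).comp ((hm _ (by omega)).prodMk (hm _ (by omega)))
      exact ((h i 0).mul (ih s (by omega) 0 j)).add ((h i 1).mul (ih s (by omega) 1 j))
  exact key t _ (by omega) i j

lemma abs_pastAvg_le (hD : ∀ x, |φ x| ≤ D) (n : ℕ) (ω : ℤ → ℕ) :
    |pastAvg M φ n ω| ≤ D * planeMeasure.real univ := by
  have h0 : 0 ≤ D * planeMeasure.real univ :=
    mul_nonneg ((abs_nonneg _).trans (hD 0)) measureReal_nonneg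
  rcases Nat.eq_zero_or_pos n with rfl | hn
  · simpa [pastAvg] using h0
  have hn' : (0 : ℝ) < n := by exact_mod_cast hn
  rw [pastAvg, abs_mul, abs_of_pos (by positivity), one_div, inv_mul_le_iff₀ hn']
  refine (Finset.abs_sum_le_sum_abs _ _).trans ((Finset.sum_le_card_nsmul _ _ _ fun t _ =>
    abs_integral_planeMeasure_le fun x => hD _).trans ?_)
  simp

lemma abs_pastAvg_shift_sub_le (hD : ∀ x, |φ x| ≤ D) (n : ℕ) (ω : ℤ → ℕ) :
    |pastAvg M φ n (shift ω) - pastAvg M (fun x => φ (M (ω 0) (ω 1) *ᵥ x)) n ω| ≤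
      2 * D * planeMeasure.real univ / n := by
  rcases n with _ | n
  · simp [pastAvg]
  have hn' : (0 : ℝ) < (n + 1 : ℕ) := by positivity
  simp only [pastAvg]
  rw [← mul_sub, abs_mul, abs_of_pos (by positivity), one_div, inv_mul_eq_div]
  gcongr
  rw [Finset.sum_range_succ', Finset.sum_range_succ]
  have e : ∀ t : ℕ, ∫ x, φ (pathProd M (shift ω) (-((t + 1 : ℕ) : ℤ)) (t + 1) *ᵥ x) ∂planeMeasure =
      ∫ x, φ (M (ω 0) (ω 1) *ᵥ (pathProd M ω (-t) t *ᵥ x)) ∂planeMeasure := by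
    intro t
    have h := pathProd_shift_iterate (M := M) 1 ω (-((t + 1 : ℕ) : ℤ)) (t + 1)
    simp only [Function.iterate_one] at h
    have h2 : (-((t + 1 : ℕ) : ℤ)) + ((1 : ℕ) : ℤ) = -t := by push_cast; ring
    rw [h, h2, pathProd]
    simp only [mulVec_mulVec, neg_add_cancel, zero_add]
  simp_rw [e]
  have a := abs_integral_planeMeasure_le (f := fun x =>
    φ (pathProd M (shift ω) (-((0 : ℕ) : ℤ)) 0 *ᵥ x)) fun x => hD _
  have b := abs_integral_planeMeasure_le (f := fun x =>
    φ (M (ω 0) (ω 1) *ᵥ (pathProd M ω (-(n : ℤ)) n *ᵥ x))) fun x => hD _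
  rw [abs_le] at *
  constructor <;> linarith [a.1, a.2, b.1, b.2]

/-- If the Lyapunov exponent vanishes, the past averages asymptotically decorrelate from
martingale increments along the future filtration. -/
lemma tendsto_integral_sub_condExp_mul_pastAvg (hμ : MeasurePreserving shift μ μ)
    (hM : ∀ a b, (M a b).det = 1) (hF : ∀ a b, frobSq (M a b) ≤ F)
    (hlyap : Tendsto (fun n : ℕ => (1 / (n : ℝ)) * ∫ ω, log (frobSq (pathProd M ω 0 n)) ∂μ)
      atTop (𝓝 0))
    (hφ : Measurable φ) (hD : ∀ x, |φ x| ≤ D) {r : ℕ}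
    (hχ : StronglyMeasurable[futureAlg (-r)] χ) (hK : ∀ ω, |χ ω| ≤ K) :
    Tendsto (fun n => ∫ ω, (χ ω - (μ[χ|futureAlg 0]) ω) * pastAvg M φ n ω ∂μ) atTop (𝓝 0) := by
  have hF0 : 1 ≤ F := (one_le_frobSq (hM 0 0)).trans (hF 0 0)
  have hχi : Integrable χ μ :=
    .of_bound (hχ.mono (futureAlg_le _)).aestronglyMeasurable K (.of_forall hK)
  have hΔi : Integrable (fun ω => χ ω - (μ[χ|futureAlg 0]) ω) μ := hχi.sub integrable_condExp
  set c : ℝ := K * D * planeMeasure.real univ * r with hc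
  have hc0 : 0 ≤ c := by
    have := (abs_nonneg _).trans (hK fun _ => 0)
    have := (abs_nonneg _).trans (hD 0)
    positivity
  set e : ℕ → ℝ := fun n => (1 / (n : ℝ)) * ∫ ω, log (frobSq (pathProd M ω 0 n)) ∂μ with he
  have bound : ∀ ε > 0, ∀ n : ℕ, 1 ≤ n →
      |∫ ω, (χ ω - (μ[χ|futureAlg 0]) ω) * pastAvg M φ n ω ∂μ| ≤
        c * (1 / ε * e n + 2 * ε * (1 + r)) := by
    intro ε hε n hn
    have hn' : (1 : ℝ) ≤ n := by exact_mod_cast hn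
    have key := sum_abs_integral_pathProd_le hμ hM hF hF0 hφ hD hχ hK hε n
    have eq : ∫ ω, (χ ω - (μ[χ|futureAlg 0]) ω) * pastAvg M φ n ω ∂μ =
        (1 / n) * ∑ t ∈ Finset.range n, ∫ ω, (χ ω - (μ[χ|futureAlg 0]) ω) *
          ∫ x, φ (pathProd M ω (-t) t *ᵥ x) ∂planeMeasure ∂μ := by
      rw [← integral_finsetSum, ← integral_const_mul]
      · refine integral_congr_ae (.of_forall fun ω => ?_)
        simp only [pastAvg, ← Finset.mul_sum]
        ring
      · intro t _
        refine hΔi.mul_bdd (c := D * planeMeasure.real univ)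
          (measurable_integral_pathProd hφ (fun i j =>
            measurable_pathProd_apply (fun u _ => measurable_pi_apply u) t i j)).aestronglyMeasurable
          (.of_forall fun ω => abs_integral_planeMeasure_le fun x => hD _)
    rw [eq, abs_mul, abs_of_pos (by positivity), one_div, inv_mul_le_iff₀ (by positivity)]
    refine (Finset.abs_sum_le_sum_abs _ _).trans (key.trans ?_)
    have : (n : ℝ) * e n = ∫ ω, log (frobSq (pathProd M ω 0 n)) ∂μ := by
      simp only [he]; field_simp
    rw [← this]
    have h2 : (n : ℝ) + r ≤ n * (1 + r) := by nlinarith [Nat.cast_nonneg (α := ℝ) r]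
    calc c * (1 / ε * (n * e n) + 2 * ε * (n + r))
        ≤ c * (1 / ε * (n * e n) + 2 * ε * (n * (1 + r))) := by gcongr
      _ = _ := by ring
  rw [Metric.tendsto_atTop]
  intro δ hδ
  have hr : (0 : ℝ) ≤ r := Nat.cast_nonneg r
  set ε : ℝ := δ / (4 * (c + 1) * (1 + r)) with hε
  have hε0 : 0 < ε := by positivity
  have h1 : c * (2 * ε * (1 + r)) < δ := by
    have : c * (2 * ε * (1 + r)) = c * δ / (2 * (c + 1)) := by
      rw [hε]; field_simp; ring
    rw [this, div_lt_iff₀ (by positivity)]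
    nlinarith
  have ht : Tendsto (fun n => c * (1 / ε * e n + 2 * ε * (1 + r))) atTop
      (𝓝 (c * (1 / ε * 0 + 2 * ε * (1 + r)))) :=
    ((hlyap.const_mul _).add_const _).const_mul _
  rw [mul_zero, zero_add] at ht
  obtain ⟨N, hN⟩ := eventually_atTop.1 (ht.eventually_lt_const h1)
  refine ⟨max N 1, fun n hn => ?_⟩
  rw [dist_zero_right]
  exact (bound ε hε0 n ((le_max_right _ _).trans hn)).trans_lt (hN n ((le_max_left _ _).trans hn))

end Correlation

section WeakLimit

lemma exists_weak_limit {E : Type*} [NormedAddCommGroup E] [InnerProductSpace ℝ E]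
    [CompleteSpace E] (𝒰 : Ultrafilter ℕ) {u : ℕ → E} {R : ℝ} (hu : ∀ n, ‖u n‖ ≤ R) :
    ∃ f : E, ∀ g, Tendsto (fun n => inner ℝ (u n) g) 𝒰 (𝓝 (inner ℝ f g)) := by
  set v : ℕ → WeakDual ℝ E := fun n =>
    StrongDual.toWeakDual (InnerProductSpace.toDual ℝ E (u n)) with hv
  have hK := WeakDual.isCompact_closedBall (𝕜 := ℝ) (E := E) 0 R
  have hmem : ∀ n, v n ∈ WeakDual.toStrongDual ⁻¹' Metric.closedBall (0 : StrongDual ℝ E) R := by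
    intro n
    simp only [mem_preimage, mem_closedBall_zero_iff, hv]
    exact ((InnerProductSpace.toDual ℝ E).norm_map (u n)).le.trans (hu n)
  obtain ⟨x, -, hx⟩ := hK.ultrafilter_le_nhds (𝒰.map v)
    (le_principal_iff.2 (Filter.mem_map.2 (univ_mem' hmem)))
  refine ⟨(InnerProductSpace.toDual ℝ E).symm (WeakDual.toStrongDual x), fun g => ?_⟩
  rw [InnerProductSpace.toDual_symm_apply]
  exact ((WeakDual.eval_continuous g).tendsto x).comp hx

lemma exists_weak_limit_of_bound {Ω : Type*} [MeasurableSpace Ω] {μ : Measure Ω}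
    [IsProbabilityMeasure μ] (𝒰 : Ultrafilter ℕ) {u : ℕ → Ω → ℝ} {R : ℝ}
    (hm : ∀ n, Measurable (u n)) (hu : ∀ n ω, |u n ω| ≤ R) :
    ∃ f : Ω → ℝ, Integrable f μ ∧ ∀ g : Ω → ℝ, AEStronglyMeasurable g μ →
      (∃ B, ∀ᵐ ω ∂μ, |g ω| ≤ B) →
      Integrable (fun ω => g ω * f ω) μ ∧
      Tendsto (fun n => ∫ ω, g ω * u n ω ∂μ) 𝒰 (𝓝 (∫ ω, g ω * f ω ∂μ)) := by
  have hR : 0 ≤ R := by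
    obtain ⟨ω⟩ : Nonempty Ω := nonempty_of_isProbabilityMeasure μ
    exact (abs_nonneg _).trans (hu 0 ω)
  have hmem : ∀ n, MemLp (u n) 2 μ := fun n =>
    .of_bound (hm n).aestronglyMeasurable R (.of_forall (hu n))
  have hnorm : ∀ n, ‖(hmem n).toLp (u n)‖ ≤ R := by
    intro n
    have := Lp.norm_le_of_ae_bound (p := 2) (μ := μ) (f := (hmem n).toLp (u n)) hR (by
      filter_upwards [(hmem n).coeFn_toLp] with ω h
      rw [h]; exact hu n ω)
    simpa [measureUnivNNReal] using this
  obtain ⟨f, hf⟩ := exists_weak_limit 𝒰 hnorm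
  refine ⟨f, (Lp.memLp f).integrable (by norm_num), fun g hg ⟨B, hB⟩ => ⟨?_, ?_⟩⟩
  · exact ((Lp.memLp f).integrable (by norm_num)).bdd_mul hg hB
  · have hgm : MemLp g 2 μ := .of_bound hg B hB
    have h := hf (hgm.toLp g)
    simp only [L2.inner_def] at h
    convert h using 2
    · refine integral_congr_ae ?_
      filter_upwards [(hmem _).coeFn_toLp, hgm.coeFn_toLp] with ω h1 h2
      rw [h1, h2]; simp
    · refine integral_congr_ae ?_
      filter_upwards [hgm.coeFn_toLp] with ω h2
      rw [h2]; simp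

lemma abs_condExp_indicator_one_le {Ω : Type*} {m m0 : MeasurableSpace Ω} {μ : Measure Ω}
    [IsProbabilityMeasure μ] (hm : m ≤ m0) {s : Set Ω} (hs : MeasurableSet s) :
    ∀ᵐ ω ∂μ, |(μ[s.indicator fun _ => (1 : ℝ)|m]) ω| ≤ 1 := by
  filter_upwards [condExp_mem_Icc (μ := μ) (Y := s.indicator fun _ => (1 : ℝ)) (c := 0) (C := 1) hm
    ((integrable_const 1).indicator hs)
    (.of_forall fun ω => by by_cases h : ω ∈ s <;> simp [h])] with ω h
  rw [abs_of_nonneg h.1]; exact h.2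

lemma integral_indicator_one_mul {Ω : Type*} [MeasurableSpace Ω] {μ : Measure Ω} {s : Set Ω}
    (hs : MeasurableSet s) (f : Ω → ℝ) :
    ∫ ω, (s.indicator fun _ => (1 : ℝ)) ω * f ω ∂μ = ∫ ω in s, f ω ∂μ := by
  rw [← integral_indicator hs]
  refine integral_congr_ae (.of_forall fun ω => ?_)
  by_cases hω : ω ∈ s <;> simp [hω]

lemma setIntegral_condExp_eq {Ω : Type*} {m m0 : MeasurableSpace Ω} {μ : Measure Ω}
    [IsProbabilityMeasure μ] (hm : m ≤ m0) {s : Set Ω} (hs : MeasurableSet s) {f : Ω → ℝ}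
    (hf : Integrable f μ) :
    ∫ ω in s, (μ[f|m]) ω ∂μ = ∫ ω, (μ[s.indicator fun _ => (1 : ℝ)|m]) ω * f ω ∂μ := by
  set g : Ω → ℝ := s.indicator fun _ => 1 with hg
  have hgi : Integrable g μ := (integrable_const 1).indicator hs
  have hgb : ∀ ω, ‖g ω‖ ≤ 1 := fun ω => by by_cases h : ω ∈ s <;> simp [hg, h]
  have h2 := integral_mul_condExp_of_bound (μ := μ) (Y := f) hm
    (stronglyMeasurable_condExp (f := g)).aestronglyMeasurable
    (abs_condExp_indicator_one_le hm hs) hf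
  have hpull := condExp_mul_of_aestronglyMeasurable_left (μ := μ) (m := m) (f := μ[f|m]) (g := g)
    stronglyMeasurable_condExp.aestronglyMeasurable
    (integrable_condExp.mul_bdd (c := 1) hgi.1 (.of_forall hgb)) hgi
  have h := integral_condExp (μ := μ) hm (f := μ[f|m] * g)
  rw [integral_congr_ae hpull] at h
  rw [← h2, ← integral_indicator_one_mul hs]
  simpa only [Pi.mul_apply, mul_comm] using h.symm

/-- Weak limits of variables measurable for a sub-σ-algebra are measurable for it. -/
lemma ae_eq_condExp_of_weak_limit {Ω : Type*} {m m0 : MeasurableSpace Ω} {μ : Measure Ω}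
    [IsProbabilityMeasure μ] (hm : m ≤ m0) {l : Filter ℕ} [l.NeBot] {u : ℕ → Ω → ℝ} {R : ℝ}
    (hum : ∀ n, Measurable[m] (u n)) (hu : ∀ n ω, |u n ω| ≤ R) {f : Ω → ℝ}
    (hf : Integrable f μ)
    (hlim : ∀ g : Ω → ℝ, AEStronglyMeasurable g μ → (∃ B, ∀ᵐ ω ∂μ, |g ω| ≤ B) →
      Tendsto (fun n => ∫ ω, g ω * u n ω ∂μ) l (𝓝 (∫ ω, g ω * f ω ∂μ))) :
    f =ᵐ[μ] μ[f|m] := by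
  refine hf.ae_eq_of_forall_setIntegral_eq _ _ integrable_condExp fun s hs _ => ?_
  have hgi : Integrable (s.indicator fun _ => (1 : ℝ)) μ := (integrable_const 1).indicator hs
  have l1 := hlim _ hgi.1 ⟨1, .of_forall fun ω => by by_cases h : ω ∈ s <;> simp [h]⟩
  have l2 := hlim (μ[s.indicator fun _ => (1 : ℝ)|m]) integrable_condExp.1
    ⟨1, abs_condExp_indicator_one_le hm hs⟩
  have e : ∀ n, ∫ ω, (μ[s.indicator fun _ => (1 : ℝ)|m]) ω * u n ω ∂μ =
      ∫ ω, (s.indicator fun _ => (1 : ℝ)) ω * u n ω ∂μ := fun n => by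
    have := integral_mul_condExp_of_bound (μ := μ) hm
      (hum n).stronglyMeasurable.aestronglyMeasurable (.of_forall (hu n)) hgi
    simpa only [mul_comm] using this
  simp_rw [e] at l2
  rw [setIntegral_condExp_eq hm hs hf, ← integral_indicator_one_mul hs]
  exact tendsto_nhds_unique l1 l2

lemma iSup_futureAlg : (⨆ n : ℕ, futureAlg (-n)) = (MeasurableSpace.pi : MeasurableSpace (ℤ → ℕ)) := by
  refine le_antisymm (iSup_le fun n => futureAlg_le _) ?_
  rw [MeasurableSpace.pi]
  refine iSup_le fun u => ?_
  refine le_trans ?_ (le_iSup _ u.natAbs)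
  exact (measurable_coord_futureAlg (s := -u.natAbs) (u := u) (by omega)).comap_le

/-- A function uncorrelated with the martingale increments of the future filtration is measurable
with respect to the future. -/
lemma ae_eq_condExp_futureAlg {μ : Measure (ℤ → ℕ)} [IsProbabilityMeasure μ] {f : (ℤ → ℕ) → ℝ}
    (hf : Integrable f μ)
    (h0 : ∀ (r : ℕ) (χ : (ℤ → ℕ) → ℝ), StronglyMeasurable[futureAlg (-r)] χ →
      (∀ ω, χ ω ∈ Icc (0 : ℝ) 1) → ∫ ω, (χ ω - (μ[χ|futureAlg 0]) ω) * f ω ∂μ = 0) :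
    f =ᵐ[μ] μ[f|futureAlg 0] := by
  have hr : ∀ r : ℕ, μ[f|futureAlg 0] =ᵐ[μ] μ[f|futureAlg (-r)] := by
    intro r
    refine ae_eq_condExp_of_forall_setIntegral_eq (futureAlg_le _) hf
      (fun _ _ _ => integrable_condExp.integrableOn) ?_
      (stronglyMeasurable_condExp.mono (futureAlg_anti (by omega))).aestronglyMeasurable
    intro s hs _
    have hs' := futureAlg_le _ s hs
    have hgi : Integrable (s.indicator fun _ => (1 : ℝ)) μ := (integrable_const 1).indicator hs'
    have h := h0 r (s.indicator fun _ => (1 : ℝ)) (stronglyMeasurable_const.indicator hs)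
      (fun ω => by by_cases h : ω ∈ s <;> simp [h])
    simp only [sub_mul] at h
    rw [integral_sub (hf.bdd_mul (c := 1) hgi.1
        (.of_forall fun ω => by by_cases h : ω ∈ s <;> simp [h]))
      (hf.bdd_mul integrable_condExp.1 (abs_condExp_indicator_one_le (futureAlg_le 0) hs')),
      sub_eq_zero, integral_indicator_one_mul hs'] at h
    rw [h, setIntegral_condExp_eq (futureAlg_le 0) hs' hf]
  let ℱ : Filtration ℕ (MeasurableSpace.pi : MeasurableSpace (ℤ → ℕ)) :=
    ⟨fun n => futureAlg (-n), fun a b h => futureAlg_anti (by omega), fun n => futureAlg_le _⟩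
  have hlim := tendsto_ae_condExp (μ := μ) (ℱ := ℱ) f
  have hsup : (⨆ n, ℱ n) = MeasurableSpace.pi := iSup_futureAlg
  rw [hsup] at hlim
  have hself : μ[f|MeasurableSpace.pi] =ᵐ[μ] f := condExp_of_aestronglyMeasurable' le_rfl hf.1 hf
  filter_upwards [hlim, hself, ae_all_iff.2 hr] with ω h1 h2 h3
  rw [h2] at h1
  have h4 : ∀ n, (μ[f|ℱ n]) ω = (μ[f|futureAlg 0]) ω := fun n => (h3 n).symm
  simp_rw [h4] at h1
  exact tendsto_nhds_unique h1 tendsto_const_nhds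

end WeakLimit

section LocalProduct

variable {ℓ : ℕ} {W : Set (ℕ × ℕ)} {μ : Measure (ℤ → ℕ)}

lemma measurable_projPlus : Measurable projPlus :=
  measurable_pi_lambda _ fun _ => measurable_pi_apply _

lemma measurable_projMinus : Measurable projMinus :=
  measurable_pi_lambda _ fun _ => measurable_pi_apply _

lemma exists_mem_SFT_pairProj {y x : ℕ → ℕ} (h0 : y 0 = x 0)
    (hy : ∀ n, (1 ≤ y n ∧ y n ≤ ℓ) ∧ (y (n + 1), y n) ∈ W)
    (hx : ∀ n, (1 ≤ x n ∧ x n ≤ ℓ) ∧ (x n, x (n + 1)) ∈ W) :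
    ∃ ω ∈ SFT ℓ W, pairProj ω = (y, x) := by
  refine ⟨fun n => if 0 ≤ n then x n.toNat else y (-n).toNat, ⟨fun n => ?_, fun n => ?_⟩, ?_⟩
  · dsimp only
    split_ifs
    exacts [(hx _).1, (hy _).1]
  · rcases lt_trichotomy n (-1) with h | h | h
    · have h1 : ¬ (0 ≤ n) := by omega
      have h2 : ¬ (0 ≤ n + 1) := by omega
      have h3 : (-n).toNat = (-(n + 1)).toNat + 1 := by omega
      simp only [h1, h2, if_false, h3]
      exact (hy _).2
    · subst h
      simpa [h0] using (hy 0).2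
    · have h1 : 0 ≤ n := by omega
      have h2 : 0 ≤ n + 1 := by omega
      have h3 : (n + 1).toNat = n.toNat + 1 := by omega
      simp only [h1, h2, if_true, h3]
      exact (hx _).2
  · refine Prod.ext (funext fun n => ?_) (funext fun n => ?_)
    · rcases n with _ | n
      · simp [pairProj, projMinus, h0]
      · have : ¬ (0 ≤ -((n + 1 : ℕ) : ℤ)) := by omega
        simp only [pairProj, projMinus, this, if_false]
        congr 1
    · simp [pairProj, projPlus]

/-- Under a local product structure, a variable that depends only on the past and only on the
future is constant on each cylinder of length one. -/
lemma exists_const_of_localProductStructure [IsProbabilityMeasure μ] (hconc : μ (SFT ℓ W)ᶜ = 0)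
    (hlps : LocalProductStructure ℓ W μ) {j : ℕ} (hj : 1 ≤ j) (hjℓ : j ≤ ℓ)
    {Fm Fp : (ℕ → ℕ) → ℝ} (hFm : Measurable Fm) (hFp : Measurable Fp)
    (h : ∀ᵐ ω ∂μ, Fm (projMinus ω) = Fp (projPlus ω)) :
    ∃ c, ∀ᵐ ω ∂μ, ω 0 = j → Fp (projPlus ω) = c := by
  have hconc' : ∀ᵐ ω ∂μ, ω ∈ SFT ℓ W := hconc
  obtain ⟨ψ, hψ, hmap⟩ := hlps
  obtain ⟨hInt, hmap⟩ := hmap j hj hjℓ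
  have hjs : MeasurableSet {a : ℕ → ℕ | a 0 = j} :=
    measurableSet_eq_fun (measurable_pi_apply 0) measurable_const
  have hWm : ∀ i i' : ℕ, MeasurableSet {a : ℕ → ℕ | (1 ≤ a i ∧ a i ≤ ℓ) ∧ (a i', a i) ∈ W} :=
    fun i i' => (measurableSet_preimage (measurable_pi_apply i) (measurableSet_Icc (a := 1))).inter
      (measurableSet_preimage ((measurable_pi_apply i').prodMk (measurable_pi_apply i))
        (.of_discrete (s := W)))
  have hWp : ∀ i i' : ℕ, MeasurableSet {a : ℕ → ℕ | (1 ≤ a i ∧ a i ≤ ℓ) ∧ (a i, a i') ∈ W} :=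
    fun i i' => (measurableSet_preimage (measurable_pi_apply i) (measurableSet_Icc (a := 1))).inter
      (measurableSet_preimage ((measurable_pi_apply i).prodMk (measurable_pi_apply i'))
        (.of_discrete (s := W)))
  set ρm := (Measure.map projMinus μ).restrict {a | a 0 = j} with hρm
  set ρp := (Measure.map projPlus μ).restrict {a | a 0 = j} with hρp
  have hm : ∀ᵐ y ∂ρm, y 0 = j ∧ ∀ n, (1 ≤ y n ∧ y n ≤ ℓ) ∧ (y (n + 1), y n) ∈ W := by
    refine (ae_restrict_mem hjs).and (ae_restrict_of_ae (ae_all_iff.2 fun n => ?_))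
    rw [ae_map_iff measurable_projMinus.aemeasurable (hWm n (n + 1))]
    filter_upwards [hconc'] with ω hω
    refine ⟨hω.1 _, ?_⟩
    have := hω.2 (-((n + 1 : ℕ) : ℤ))
    have e : (-((n + 1 : ℕ) : ℤ)) + 1 = -(n : ℤ) := by push_cast; ring
    rw [e] at this
    exact this
  have hp : ∀ᵐ x ∂ρp, x 0 = j ∧ ∀ n, (1 ≤ x n ∧ x n ≤ ℓ) ∧ (x n, x (n + 1)) ∈ W := by
    refine (ae_restrict_mem hjs).and (ae_restrict_of_ae (ae_all_iff.2 fun n => ?_))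
    rw [ae_map_iff measurable_projPlus.aemeasurable (hWp n (n + 1))]
    filter_upwards [hconc'] with ω hω
    exact ⟨hω.1 _, by simpa [projPlus] using hω.2 n⟩
  have hpos : ∀ᵐ z ∂ρm.prod ρp, ENNReal.ofReal (ψ z) ≠ 0 := by
    filter_upwards [Measure.quasiMeasurePreserving_fst.ae hm,
      Measure.quasiMeasurePreserving_snd.ae hp] with z h1 h2
    obtain ⟨ω, hω, he⟩ := exists_mem_SFT_pairProj (h1.1.trans h2.1.symm) h1.2 h2.2
    have := hψ ω hω
    rw [he] at this
    simpa using this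
  have hac : ρm.prod ρp ≪ Measure.map pairProj (μ.restrict {ω | ω 0 = j}) := by
    rw [hmap]
    exact withDensity_absolutelyContinuous' hInt.1.aemeasurable.ennreal_ofReal hpos
  have heq : ∀ᵐ z ∂ρm.prod ρp, Fm z.1 = Fp z.2 := by
    refine hac.ae_le ?_
    have hset : MeasurableSet {z : (ℕ → ℕ) × (ℕ → ℕ) | Fm z.1 = Fp z.2} :=
      measurableSet_eq_fun (hFm.comp measurable_fst) (hFp.comp measurable_snd)
    have hpp : Measurable pairProj := measurable_projMinus.prodMk measurable_projPlus
    exact (ae_map_iff hpp.aemeasurable hset).2 (ae_restrict_of_ae h)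
  have hconst : ∃ c, ∀ᵐ x ∂ρp, Fp x = c := by
    have h2 := Measure.ae_ae_of_ae_prod heq
    by_cases hz : ρm = 0
    · refine ⟨0, ?_⟩
      have hμz : μ {ω | ω 0 = j} = 0 := by
        have := congrArg (fun m => m univ) hz
        simp only [hρm, Measure.restrict_apply_univ, Measure.coe_zero, Pi.zero_apply] at this
        rwa [Measure.map_apply measurable_projMinus hjs] at this
      have : ρp = 0 := by
        rw [hρp, Measure.restrict_eq_zero, Measure.map_apply measurable_projPlus hjs]
        exact hμz
      simp [this]
    · have : (ae ρm).NeBot := ae_neBot.2 hz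
      obtain ⟨y, hy⟩ := h2.exists
      exact ⟨Fm y, hy.mono fun x hx => hx.symm⟩
  obtain ⟨c, hc⟩ := hconst
  refine ⟨c, ?_⟩
  rw [hρp, ae_restrict_iff' hjs, ae_map_iff measurable_projPlus.aemeasurable] at hc
  · exact hc
  · exact (hjs.compl.union (measurableSet_eq_fun hFp (measurable_const (a := c)))).congr (by
      ext; simp [imp_iff_not_or])

variable {M : ℕ → ℕ → Matrix (Fin 2) (Fin 2) ℝ} {F D : ℝ} {φ : (Fin 2 → ℝ) → ℝ}

lemma exists_measurable_comp_ae_eq {α β : Type*} [MeasurableSpace α] [mβ : MeasurableSpace β]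
    {ν : Measure α} {p : α → β} {f : α → ℝ} (h : f =ᵐ[ν] ν[f|mβ.comap p]) :
    ∃ g : β → ℝ, Measurable g ∧ ∀ᵐ a ∂ν, f a = g (p a) := by
  obtain ⟨g, hg, e⟩ :=
    (stronglyMeasurable_condExp (μ := ν) (m := mβ.comap p) (f := f)).measurable.exists_eq_measurable_comp
  refine ⟨g, hg, ?_⟩
  filter_upwards [h] with a ha
  rw [ha, e]; rfl

/-- If the Lyapunov exponent vanishes, limits of the past averages are constant on cylinders. -/
lemma exists_tendsto_setIntegral_pastAvg [IsProbabilityMeasure μ] (hconc : μ (SFT ℓ W)ᶜ = 0)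
    (hlps : LocalProductStructure ℓ W μ) (hμ : MeasurePreserving shift μ μ)
    (hM : ∀ a b, (M a b).det = 1) (hF : ∀ a b, frobSq (M a b) ≤ F)
    (hlyap : Tendsto (fun n : ℕ => (1 / (n : ℝ)) * ∫ ω, log (frobSq (pathProd M ω 0 n)) ∂μ)
      atTop (𝓝 0))
    {𝒰 : Ultrafilter ℕ} (h𝒰 : (𝒰 : Filter ℕ) ≤ atTop)
    (hφ : Measurable φ) (hD : ∀ x, |φ x| ≤ D) {j : ℕ} (hj : 1 ≤ j) (hjℓ : j ≤ ℓ) :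
    ∃ c : ℝ, ∀ s : Set (ℤ → ℕ), MeasurableSet s → s ⊆ {ω | ω 0 = j} →
      Tendsto (fun n => ∫ ω in s, pastAvg M φ n ω ∂μ) 𝒰 (𝓝 (c * μ.real s)) := by
  have hum : ∀ n, Measurable (pastAvg M φ n) :=
    fun n => measurable_pastAvg hφ (fun u _ => measurable_pi_apply u) n
  obtain ⟨f, hfi, hf⟩ := exists_weak_limit_of_bound (μ := μ) 𝒰 hum (fun n ω => abs_pastAvg_le hD n ω)
  have hpast : f =ᵐ[μ] μ[f|MeasurableSpace.comap projMinus inferInstance] := by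
    refine ae_eq_condExp_of_weak_limit (l := 𝒰) measurable_projMinus.comap_le (fun n => ?_)
      (fun n ω => abs_pastAvg_le hD n ω) hfi fun g hg hb => (hf g hg hb).2
    refine measurable_pastAvg hφ (fun u hu => ?_) n
    have h2 := (measurable_pi_apply (X := fun _ : ℕ => ℕ) (-u).toNat).comp
      (comap_measurable (m := inferInstance) projMinus)
    convert h2 using 2
    simp only [Function.comp, projMinus]
    congr 1; omega
  have hfut : f =ᵐ[μ] μ[f|futureAlg 0] := by
    refine ae_eq_condExp_futureAlg hfi fun r χ hχ hI => ?_
    have hb : ∀ ω, |χ ω| ≤ 1 := fun ω => by rw [abs_of_nonneg (hI ω).1]; exact (hI ω).2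
    have hχi : Integrable χ μ :=
      .of_bound (hχ.mono (futureAlg_le _)).aestronglyMeasurable 1 (.of_forall hb)
    have h1 := tendsto_integral_sub_condExp_mul_pastAvg hμ hM hF hlyap hφ hD hχ hb
    refine tendsto_nhds_unique (hf (fun ω => χ ω - (μ[χ|futureAlg 0]) ω)
      (hχi.sub integrable_condExp).1 ⟨1, ?_⟩).2 (h1.mono_left h𝒰)
    filter_upwards [condExp_mem_Icc (μ := μ) (futureAlg_le 0) hχi (.of_forall hI)] with ω h
    rw [abs_le]
    constructor <;> linarith [h.1, h.2, (hI ω).1, (hI ω).2]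
  obtain ⟨Fm, hFm, em⟩ := exists_measurable_comp_ae_eq hpast
  obtain ⟨Fp, hFp, ep⟩ := exists_measurable_comp_ae_eq hfut
  have ep' : ∀ᵐ ω ∂μ, f ω = Fp (projPlus ω) := by
    filter_upwards [ep] with ω h
    rw [h]; congr 1; ext i; simp [projPlus]
  obtain ⟨c, hc⟩ := exists_const_of_localProductStructure hconc hlps hj hjℓ hFm hFp (by
    filter_upwards [em, ep'] with ω h1 h2 using h1.symm.trans h2)
  refine ⟨c, fun s hs hsj => ?_⟩
  have h := (hf (s.indicator fun _ => (1 : ℝ)) (measurable_const.indicator hs).aestronglyMeasurable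
    ⟨1, .of_forall fun ω => by by_cases h : ω ∈ s <;> simp [h]⟩).2
  simp_rw [integral_indicator_one_mul hs] at h
  convert h using 2
  rw [setIntegral_congr_ae (g := fun _ => c) hs]
  · simp [mul_comm]
  · filter_upwards [hc, ep'] with ω h1 h2 hω
    rw [h2]; exact h1 (hsj hω)

end LocalProduct

section Mean

/-- Bounded Borel functions on the plane. -/
def BddMeas (φ : (Fin 2 → ℝ) → ℝ) : Prop := Measurable φ ∧ ∃ D, ∀ x, |φ x| ≤ D

/-- Normalized positive functionals on bounded Borel functions, not charging the origin. -/
structure IsPlaneMean (ν : ((Fin 2 → ℝ) → ℝ) → ℝ) : Prop where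
  add : ∀ {f g}, BddMeas f → BddMeas g → ν (fun x => f x + g x) = ν f + ν g
  smul : ∀ (c : ℝ) {f}, BddMeas f → ν (fun x => c * f x) = c * ν f
  one : ν (fun _ => 1) = 1
  nonneg : ∀ {f}, BddMeas f → (∀ x, x ≠ 0 → 0 ≤ f x) → 0 ≤ ν f

lemma BddMeas.add {f g : (Fin 2 → ℝ) → ℝ} (hf : BddMeas f) (hg : BddMeas g) :
    BddMeas fun x => f x + g x := by
  obtain ⟨hf, C, hC⟩ := hf
  obtain ⟨hg, D, hD⟩ := hg
  exact ⟨hf.add hg, C + D, fun x => (abs_add_le _ _).trans (add_le_add (hC x) (hD x))⟩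

lemma BddMeas.smul (c : ℝ) {f : (Fin 2 → ℝ) → ℝ} (hf : BddMeas f) :
    BddMeas fun x => c * f x := by
  obtain ⟨hf, C, hC⟩ := hf
  exact ⟨hf.const_mul c, |c| * C, fun x => by
    rw [abs_mul]; exact mul_le_mul_of_nonneg_left (hC x) (abs_nonneg _)⟩

lemma BddMeas.comp_mulVec {f : (Fin 2 → ℝ) → ℝ} (hf : BddMeas f) (B : Matrix (Fin 2) (Fin 2) ℝ) :
    BddMeas fun x => f (B *ᵥ x) :=
  ⟨hf.1.comp (measurable_mulVec (P := fun _ => B) (fun _ _ => measurable_const) measurable_id),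
    hf.2.imp fun _ h _ => h _⟩

lemma bddMeas_one : BddMeas fun _ => 1 := ⟨measurable_const, 1, by simp⟩

variable {ℓ : ℕ} {W : Set (ℕ × ℕ)} {μ : Measure (ℤ → ℕ)}
variable {M : ℕ → ℕ → Matrix (Fin 2) (Fin 2) ℝ} {F : ℝ} {φ φ' : (Fin 2 → ℝ) → ℝ}

lemma integrable_bddMeas_comp (hφ : BddMeas φ) (B : Matrix (Fin 2) (Fin 2) ℝ) :
    Integrable (fun x => φ (B *ᵥ x)) planeMeasure := by
  obtain ⟨hm, D, hD⟩ := hφ.comp_mulVec B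
  exact .of_bound hm.aestronglyMeasurable D (.of_forall hD)

lemma pastAvg_add (hφ : BddMeas φ) (hφ' : BddMeas φ') (n : ℕ) (ω : ℤ → ℕ) :
    pastAvg M (fun x => φ x + φ' x) n ω = pastAvg M φ n ω + pastAvg M φ' n ω := by
  simp only [pastAvg]
  rw [← mul_add, ← Finset.sum_add_distrib]
  congr 1
  exact Finset.sum_congr rfl fun t _ =>
    integral_add (integrable_bddMeas_comp hφ _) (integrable_bddMeas_comp hφ' _)

lemma pastAvg_smul (c : ℝ) (n : ℕ) (ω : ℤ → ℕ) :
    pastAvg M (fun x => c * φ x) n ω = c * pastAvg M φ n ω := by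
  simp only [pastAvg, integral_const_mul, ← Finset.mul_sum]
  ring

lemma pastAvg_nonneg (hM : ∀ a b, (M a b).det = 1) (hφ : ∀ x, x ≠ 0 → 0 ≤ φ x) (n : ℕ)
    (ω : ℤ → ℕ) : 0 ≤ pastAvg M φ n ω := by
  refine mul_nonneg (by positivity) (Finset.sum_nonneg fun t _ => integral_nonneg_of_ae ?_)
  have h0 : ∀ᵐ x ∂planeMeasure, x ≠ 0 := by
    rw [ae_iff]; simpa using planeMeasure_singleton_zero
  filter_upwards [h0] with x hx
  refine hφ _ fun h => hx ?_
  rw [← adjugate_mulVec_mulVec (det_pathProd hM ω (-t) t) x, h, mulVec_zero]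

lemma pastAvg_one {n : ℕ} (hn : n ≠ 0) (ω : ℤ → ℕ) :
    pastAvg M (fun _ => 1) n ω = planeMeasure.real univ := by
  have : (n : ℝ) ≠ 0 := by exact_mod_cast hn
  simp [pastAvg, this]

/-- If the Lyapunov exponent vanishes, there is a family of means indexed by the letters which is
equivariant under all transitions of positive probability. -/
lemma exists_invariant_mean [IsProbabilityMeasure μ] (hconc : μ (SFT ℓ W)ᶜ = 0)
    (hlps : LocalProductStructure ℓ W μ) (hμ : MeasurePreserving shift μ μ)
    (hM : ∀ a b, (M a b).det = 1) (hF : ∀ a b, frobSq (M a b) ≤ F)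
    (hlyap : Tendsto (fun n : ℕ => (1 / (n : ℝ)) * ∫ ω, log (frobSq (pathProd M ω 0 n)) ∂μ)
      atTop (𝓝 0)) :
    ∃ ν : ℕ → ((Fin 2 → ℝ) → ℝ) → ℝ,
      (∀ a, μ {ω | ω 0 = a} ≠ 0 → IsPlaneMean (ν a)) ∧
      ∀ a b, μ {ω | ω 0 = a ∧ ω 1 = b} ≠ 0 → ∀ φ, BddMeas φ →
        ν b φ = ν a fun x => φ (M a b *ᵥ x) := by
  classical
  have hconc' : ∀ᵐ ω ∂μ, ω ∈ SFT ℓ W := hconc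
  set γ := planeMeasure.real univ with hγ
  have hγ0 : 0 < γ := planeMeasure_univ_pos
  set 𝒰 : Ultrafilter ℕ := Filter.hyperfilter ℕ with h𝒰
  have h𝒰' : (𝒰 : Filter ℕ) ≤ atTop := by
    rw [h𝒰, ← Nat.cofinite_eq_atTop]; exact Filter.hyperfilter_le_cofinite
  have hcyl : ∀ (u : ℤ) (a : ℕ), MeasurableSet {ω : ℤ → ℕ | ω u = a} := fun u a =>
    measurableSet_eq_fun (measurable_pi_apply u) measurable_const
  have hval : ∀ a, μ {ω | ω 0 = a} ≠ 0 → 1 ≤ a ∧ a ≤ ℓ := by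
    intro a ha
    by_contra h
    have hsub : {ω : ℤ → ℕ | ω 0 = a} ⊆ (SFT ℓ W)ᶜ := fun ω (hω : ω 0 = a) hω' =>
      h (hω ▸ hω'.1 0)
    exact ha (measure_mono_null hsub hconc)
  have key : ∀ a φ, μ {ω | ω 0 = a} ≠ 0 → BddMeas φ → ∃ c : ℝ, ∀ s : Set (ℤ → ℕ),
      MeasurableSet s → s ⊆ {ω | ω 0 = a} →
      Tendsto (fun n => ∫ ω in s, pastAvg M φ n ω ∂μ) 𝒰 (𝓝 (γ * c * μ.real s)) := by
    rintro a φ ha ⟨hφ, D, hD⟩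
    obtain ⟨c, hc⟩ := exists_tendsto_setIntegral_pastAvg hconc hlps hμ hM hF hlyap h𝒰' hφ hD
      (hval a ha).1 (hval a ha).2
    exact ⟨c / γ, fun s hs hsa => by rw [mul_div_cancel₀ _ hγ0.ne']; exact hc s hs hsa⟩
  choose! ν hν using key
  have hInt : ∀ {φ}, BddMeas φ → ∀ (n : ℕ) (s : Set (ℤ → ℕ)),
      Integrable (pastAvg M φ n) (μ.restrict s) := by
    rintro φ ⟨hφ, D, hD⟩ n s
    exact .of_bound (measurable_pastAvg hφ (fun u _ => measurable_pi_apply u) n).aestronglyMeasurable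
      _ (.of_forall fun ω => abs_pastAvg_le hD n ω)
  have huniq : ∀ {s : Set (ℤ → ℕ)}, μ s ≠ 0 → ∀ {u : ℕ → ℝ} {c c' : ℝ},
      Tendsto u 𝒰 (𝓝 (γ * c * μ.real s)) → Tendsto u 𝒰 (𝓝 (γ * c' * μ.real s)) → c = c' := by
    intro s hs u c c' h1 h2
    have hs' : 0 < μ.real s := ENNReal.toReal_pos hs (measure_ne_top _ _)
    have h := tendsto_nhds_unique h1 h2
    exact mul_left_cancel₀ hγ0.ne' (mul_right_cancel₀ hs'.ne' h)
  refine ⟨ν, fun a ha => ⟨fun {f g} hf hg => ?_, fun c {f} hf => ?_, ?_, fun {f} hf h0 => ?_⟩, ?_⟩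
  · refine huniq ha (hν a _ ha (hf.add hg) _ (hcyl 0 a) subset_rfl) ?_
    have h := (hν a f ha hf _ (hcyl 0 a) subset_rfl).add (hν a g ha hg _ (hcyl 0 a) subset_rfl)
    simp_rw [pastAvg_add hf hg, integral_add (hInt hf _ _) (hInt hg _ _)]
    convert h using 2; ring
  · refine huniq ha (hν a _ ha (hf.smul c) _ (hcyl 0 a) subset_rfl) ?_
    have h := (hν a f ha hf _ (hcyl 0 a) subset_rfl).const_mul c
    simp_rw [pastAvg_smul, integral_const_mul]
    convert h using 2; ring
  · refine huniq ha (hν a _ ha bddMeas_one _ (hcyl 0 a) subset_rfl) ?_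
    refine Tendsto.congr' (f₁ := fun _ => γ * 1 * μ.real {ω | ω 0 = a}) ?_ tendsto_const_nhds
    filter_upwards [h𝒰' (eventually_ne_atTop 0)] with n hn
    simp [pastAvg_one hn, mul_comm, hγ]
  · have h := hν a f ha hf _ (hcyl 0 a) subset_rfl
    have h2 := ge_of_tendsto' h fun n => integral_nonneg fun ω => pastAvg_nonneg hM h0 n ω
    have hs' : 0 < μ.real {ω | ω 0 = a} := ENNReal.toReal_pos ha (measure_ne_top _ _)
    by_contra hneg
    push Not at hneg
    have : γ * ν a f * μ.real {ω | ω 0 = a} < 0 :=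
      mul_neg_of_neg_of_pos (mul_neg_of_pos_of_neg hγ0 hneg) hs'
    linarith
  · intro a b hab φ hφ
    set s : Set (ℤ → ℕ) := {ω | ω 0 = a ∧ ω 1 = b} with hs
    set s' : Set (ℤ → ℕ) := {ω | ω (-1) = a ∧ ω 0 = b} with hs'
    have hsm : MeasurableSet s := (hcyl 0 a).inter (hcyl 1 b)
    have hsm' : MeasurableSet s' := (hcyl (-1) a).inter (hcyl 0 b)
    have hpre : shift ⁻¹' s' = s := by ext ω; simp [hs, hs', shift]
    have hμs : μ s' = μ s := by rw [← hpre, hμ.measure_preimage hsm'.nullMeasurableSet]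
    have ha : μ {ω | ω 0 = a} ≠ 0 := fun h => hab (measure_mono_null (fun _ h => h.1) h)
    have hb : μ {ω | ω 0 = b} ≠ 0 := fun h =>
      hab (hμs ▸ measure_mono_null (fun _ h => h.2) h)
    have l1 := hν b φ hb hφ s' hsm' fun _ h => h.2
    have l2 := hν a _ ha (hφ.comp_mulVec (M a b)) s hsm fun _ h => h.1
    have hr : μ.real s' = μ.real s := by simp only [Measure.real, hμs]
    rw [hr] at l1
    refine huniq hab l1 ?_
    obtain ⟨D, hD⟩ := hφ.2
    have e : ∀ n, ∫ ω in s', pastAvg M φ n ω ∂μ = ∫ ω in s, pastAvg M φ n (shift ω) ∂μ := by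
      intro n
      rw [← integral_indicator hsm', ← integral_indicator hsm, ← hpre,
        ← integral_comp_of_measurePreserving hμ]
      · rfl
      · exact ((measurable_pastAvg hφ.1 (fun u _ => measurable_pi_apply u) n).indicator
          hsm').aestronglyMeasurable
    have hd : Tendsto (fun n => ∫ ω in s', pastAvg M φ n ω ∂μ -
        ∫ ω in s, pastAvg M (fun x => φ (M a b *ᵥ x)) n ω ∂μ) atTop (𝓝 0) := by
      have ht : Tendsto (fun n : ℕ => 2 * D * γ / (n : ℝ)) atTop (𝓝 0) :=
        tendsto_const_div_atTop_nhds_zero_nat _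
      refine squeeze_zero_norm (fun n => ?_) ht
      have i1 : Integrable (fun ω => pastAvg M φ n (shift ω)) (μ.restrict s) :=
        .of_bound ((measurable_pastAvg hφ.1 (fun u _ => measurable_pi_apply u) n).comp
          hμ.measurable).aestronglyMeasurable _ (.of_forall fun ω => abs_pastAvg_le hD n _)
      rw [e, ← integral_sub i1 (hInt (hφ.comp_mulVec _) n s)]
      have hbd : 0 ≤ 2 * D * γ / (n : ℝ) := by
        have := (abs_nonneg _).trans (hD 0)
        positivity
      refine (norm_setIntegral_le_of_norm_le_const (C := 2 * D * γ / n) (measure_lt_top _ _) ?_).trans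
        ((mul_le_mul_of_nonneg_left measureReal_le_one hbd).trans_eq (mul_one _))
      intro ω hω
      have := abs_pastAvg_shift_sub_le (M := M) hD n ω
      rw [hω.1, hω.2] at this
      exact this
    have := l2.add (hd.mono_left h𝒰')
    simpa using this

end Mean

noncomputable section

/-- The unnormalized transfer matrix at energy `E` across the transition `a → b`. -/
def stepMat (E : ℝ) (a b : ℕ) : Matrix (Fin 2) (Fin 2) ℝ :=
  !![((b : ℝ) + a) / b * E, -((a : ℝ) / b); 1, 0]

/-- The normalized transfer matrix across `a → b`, replaced by `1` outside the alphabet. -/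
def unimodStep (ℓ : ℕ) (E : ℝ) (a b : ℕ) : Matrix (Fin 2) (Fin 2) ℝ :=
  if (1 ≤ a ∧ a ≤ ℓ) ∧ 1 ≤ b ∧ b ≤ ℓ then √((b : ℝ) / a) • stepMat E a b else 1

end

lemma det_unimodStep (ℓ : ℕ) (E : ℝ) (a b : ℕ) : (unimodStep ℓ E a b).det = 1 := by
  unfold unimodStep
  split_ifs with h
  · have ha : (0 : ℝ) < a := by exact_mod_cast h.1.1
    have hb : (0 : ℝ) < b := by exact_mod_cast h.2.1
    rw [det_smul, Fintype.card_fin, Real.sq_sqrt (by positivity), stepMat, det_fin_two_of]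
    field_simp
    ring
  · simp

lemma exists_frobSq_unimodStep_le (ℓ : ℕ) (E : ℝ) :
    ∃ F, ∀ a b, frobSq (unimodStep ℓ E a b) ≤ F := by
  obtain ⟨F, hF⟩ := ((Finset.range (ℓ + 1) ×ˢ Finset.range (ℓ + 1)).image
    fun x => frobSq (unimodStep ℓ E x.1 x.2)).bddAbove
  refine ⟨max F 2, fun a b => ?_⟩
  by_cases h : a ≤ ℓ ∧ b ≤ ℓ
  · refine le_max_of_le_left (hF ?_)
    simp only [Finset.coe_image, mem_image, Finset.mem_coe, Finset.mem_product, Finset.mem_range,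
      Prod.exists]
    exact ⟨a, b, ⟨by omega, by omega⟩, rfl⟩
  · refine le_max_of_le_right ?_
    rw [unimodStep, if_neg (by tauto)]
    simp [frobSq]; norm_num

lemma AIter_eq_pathProd {ℓ : ℕ} {W : Set (ℕ × ℕ)} {ω : ℤ → ℕ} (hω : ω ∈ SFT ℓ W) (k : ℝ) (n : ℕ) :
    AIter k ω n = pathProd (unimodStep ℓ (Real.cos k)) ω (-1) n := by
  induction n with
  | zero => rfl
  | succ n ih =>
    rw [AIter, pathProd, ih, unimodStep, if_pos ⟨hω.1 _, hω.1 _⟩, Acoc, stepMat,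
      shift_iterate_apply, shift_iterate_apply]
    have h : (-1 : ℤ) + n + 1 = 0 + n := by ring
    rw [h]

lemma frobSq_le_two_mul_norm_sq (B : Matrix (Fin 2) (Fin 2) ℝ) : frobSq B ≤ 2 * ‖B‖ ^ 2 := by
  have h : ∀ j : Fin 2, B 0 j ^ 2 + B 1 j ^ 2 ≤ ‖B‖ ^ 2 := fun j => by
    have h1 := Matrix.l2_opNorm_mulVec B (EuclideanSpace.single j 1)
    rw [PiLp.norm_single, norm_one, mul_one, EuclideanSpace.norm_eq] at h1
    have h2 := Real.sqrt_le_iff.1 h1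
    simpa [Fin.sum_univ_two] using h2.2
  have h0 := h 0
  have h1 := h 1
  unfold frobSq
  linarith

lemma norm_sq_le_frobSq (B : Matrix (Fin 2) (Fin 2) ℝ) : ‖B‖ ^ 2 ≤ frobSq B := by
  suffices h : ‖B‖ ≤ √(frobSq B) by
    calc _ ≤ √(frobSq B) ^ 2 := by gcongr
      _ = _ := Real.sq_sqrt (frobSq_nonneg B)
  rw [Matrix.cstar_norm_def]
  refine ContinuousLinearMap.opNorm_le_bound _ (Real.sqrt_nonneg _) fun x => ?_
  rw [EuclideanSpace.norm_eq, EuclideanSpace.norm_eq, ← Real.sqrt_mul (frobSq_nonneg B)]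
  refine Real.sqrt_le_sqrt ?_
  have := normSqVec_mulVec_le B x.ofLp
  simpa [normSqVec, Fin.sum_univ_two, Matrix.ofLp_toEuclideanCLM] using this

lemma measurable_norm_comp {α : Type*} {m : MeasurableSpace α}
    {P : α → Matrix (Fin 2) (Fin 2) ℝ} (hP : ∀ i j, Measurable fun a => P a i j) :
    Measurable fun a => ‖P a‖ := by
  have h1 : Continuous fun B : Fin 2 → Fin 2 → ℝ => ‖Matrix.of B‖ :=
    continuous_norm (E := Matrix (Fin 2) (Fin 2) ℝ)
  exact h1.measurable.comp
    (measurable_pi_lambda _ fun i => measurable_pi_lambda _ fun j => hP i j)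

lemma tendsto_integral_log_frobSq {ℓ : ℕ} {W : Set (ℕ × ℕ)} {μ : Measure (ℤ → ℕ)}
    [IsProbabilityMeasure μ] (hconc : μ (SFT ℓ W)ᶜ = 0) (hμ : MeasurePreserving shift μ μ) {k : ℝ}
    (hk : Tendsto (fun n : ℕ => (1 / (n : ℝ)) * ∫ ω, Real.log ‖AIter k ω n‖ ∂μ) atTop (𝓝 0)) :
    Tendsto (fun n : ℕ => (1 / (n : ℝ)) *
      ∫ ω, log (frobSq (pathProd (unimodStep ℓ (Real.cos k)) ω 0 n)) ∂μ) atTop (𝓝 0) := by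
  set M := unimodStep ℓ (Real.cos k)
  obtain ⟨F, hF⟩ := exists_frobSq_unimodStep_le ℓ (Real.cos k)
  have hdet : ∀ ω s n, (pathProd M ω s n).det = 1 := det_pathProd (det_unimodStep _ _)
  have hmeas : ∀ s n i j, Measurable fun ω => pathProd M ω s n i j := fun s n =>
    measurable_pathProd_apply (fun u _ => measurable_pi_apply u) n
  have hmF : ∀ s n, Measurable fun ω => log (frobSq (pathProd M ω s n)) := fun s n =>
    Real.measurable_log.comp (measurable_frobSq_comp (hmeas s n))
  have hmN : ∀ s n, Measurable fun ω => log ‖pathProd M ω s n‖ := fun s n =>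
    Real.measurable_log.comp (measurable_norm_comp (hmeas s n))
  have hlow : ∀ s n ω, 0 ≤ log (frobSq (pathProd M ω s n)) := fun s n ω =>
    Real.log_nonneg (one_le_frobSq (hdet ω s n))
  have hnpos : ∀ s n ω, 0 < ‖pathProd M ω s n‖ := fun s n ω => by
    rcases (norm_nonneg (pathProd M ω s n)).eq_or_lt with h | h
    · have h1 := one_le_frobSq (hdet ω s n)
      have h2 := frobSq_le_two_mul_norm_sq (pathProd M ω s n)
      rw [← h] at h2
      norm_num at h2
      linarith
    · exact h
  have hupp : ∀ s n ω,
      log (frobSq (pathProd M ω s n)) ≤ log 2 + 2 * log ‖pathProd M ω s n‖ := fun s n ω => by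
    have h1 := one_le_frobSq (hdet ω s n)
    have h2 := Real.log_le_log (by linarith) (frobSq_le_two_mul_norm_sq (pathProd M ω s n))
    rwa [Real.log_mul (by norm_num) (pow_ne_zero _ (hnpos s n ω).ne'), Real.log_pow] at h2
  have hnle : ∀ s n ω, 2 * log ‖pathProd M ω s n‖ ≤ log (frobSq (pathProd M ω s n)) :=
    fun s n ω => by
      have h2 := Real.log_le_log (pow_pos (hnpos s n ω) 2) (norm_sq_le_frobSq (pathProd M ω s n))
      rwa [Real.log_pow] at h2
  have hbd : ∀ s n ω, log (frobSq (pathProd M ω s n)) ≤ log (2 * F ^ n) := fun s n ω =>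
    Real.log_le_log (by linarith [one_le_frobSq (hdet ω s n)]) (frobSq_pathProd_le hF ω s n)
  have hl2 : 0 ≤ log 2 := Real.log_nonneg (by norm_num)
  have hiF : ∀ s n, Integrable (fun ω => log (frobSq (pathProd M ω s n))) μ := fun s n =>
    Integrable.of_bound (hmF s n).aestronglyMeasurable (log (2 * F ^ n)) (ae_of_all _ fun ω => by
      rw [Real.norm_eq_abs, abs_of_nonneg (hlow s n ω)]
      exact hbd s n ω)
  have hiN : ∀ s n, Integrable (fun ω => log ‖pathProd M ω s n‖) μ := fun s n =>
    Integrable.of_bound (hmN s n).aestronglyMeasurable (log 2 + log (2 * F ^ n))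
      (ae_of_all _ fun ω => by
        rw [Real.norm_eq_abs, abs_le]
        constructor <;> linarith [hlow s n ω, hupp s n ω, hnle s n ω, hbd s n ω])
  have hshift : ∀ n, ∫ ω, log (frobSq (pathProd M ω 0 n)) ∂μ =
      ∫ ω, log (frobSq (pathProd M ω (-1) n)) ∂μ := fun n => by
    rw [← integral_comp_of_measurePreserving hμ (hmF (-1) n).aestronglyMeasurable]
    congr 1
    ext ω
    have := pathProd_shift_iterate (M := M) 1 ω (-1) n
    rw [Function.iterate_one] at this
    rw [this]
    norm_num
  have hA : ∀ n, ∫ ω, Real.log ‖AIter k ω n‖ ∂μ = ∫ ω, log ‖pathProd M ω (-1) n‖ ∂μ := fun n => by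
    refine integral_congr_ae ?_
    have : ∀ᵐ ω ∂μ, ω ∈ SFT ℓ W := hconc
    filter_upwards [this] with ω hω
    rw [AIter_eq_pathProd hω]
  have hup : Tendsto (fun n : ℕ => (1 / (n : ℝ)) * log 2 +
      2 * ((1 / (n : ℝ)) * ∫ ω, Real.log ‖AIter k ω n‖ ∂μ)) atTop (𝓝 0) := by
    have := (tendsto_one_div_atTop_nhds_zero_nat (𝕜 := ℝ).mul_const (log 2)).add (hk.const_mul 2)
    simpa using this
  refine tendsto_of_tendsto_of_tendsto_of_le_of_le tendsto_const_nhds hup (fun n => ?_) fun n => ?_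
  · exact mul_nonneg (by positivity) (integral_nonneg (hlow 0 n))
  · have h1 : ∫ ω, log (frobSq (pathProd M ω (-1) n)) ∂μ ≤
        ∫ ω, (log 2 + 2 * log ‖pathProd M ω (-1) n‖) ∂μ :=
      integral_mono (hiF _ n) ((integrable_const _).add ((hiN _ n).const_mul 2)) (hupp (-1) n)
    rw [integral_add (integrable_const _) ((hiN _ n).const_mul 2), integral_const,
      integral_const_mul] at h1
    simp only [probReal_univ, one_smul] at h1
    simp only [hshift, hA]
    have h2 : (0 : ℝ) ≤ 1 / n := by positivity
    nlinarith [mul_le_mul_of_nonneg_left h1 h2]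

noncomputable section

/-- The binary quadratic form with coefficients `p`, `q`, `r`. -/
def quadForm (p q r : ℝ) (x : Fin 2 → ℝ) : ℝ := p * x 0 ^ 2 + q * (x 0 * x 1) + r * x 1 ^ 2

/-- The quadratic form preserved by the free transfer matrix at energy `E`. -/
def freeForm (E : ℝ) : (Fin 2 → ℝ) → ℝ := quadForm 1 (-(2 * E)) 1

/-- The transfer matrix at energy `E` for constant coefficients. -/
def freeMat (E : ℝ) : Matrix (Fin 2) (Fin 2) ℝ := !![2 * E, -1; 1, 0]

end

lemma BddMeas.mul {f g : (Fin 2 → ℝ) → ℝ} (hf : BddMeas f) (hg : BddMeas g) :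
    BddMeas fun x => f x * g x := by
  obtain ⟨hf, C, hC⟩ := hf
  obtain ⟨hg, D, hD⟩ := hg
  refine ⟨hf.mul hg, C * D, fun x => ?_⟩
  rw [abs_mul]
  exact mul_le_mul (hC x) (hD x) (abs_nonneg _) ((abs_nonneg _).trans (hC x))

lemma IsPlaneMean.mono {ν : ((Fin 2 → ℝ) → ℝ) → ℝ} (hν : IsPlaneMean ν) {f g : (Fin 2 → ℝ) → ℝ}
    (hf : BddMeas f) (hg : BddMeas g) (h : ∀ x, x ≠ 0 → f x ≤ g x) : ν f ≤ ν g := by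
  have h1 := hν.nonneg (hg.add (hf.smul (-1))) fun x hx => by linarith [h x hx]
  rw [hν.add hg (hf.smul (-1)), hν.smul _ hf] at h1
  linarith

lemma IsPlaneMean.congr {ν : ((Fin 2 → ℝ) → ℝ) → ℝ} (hν : IsPlaneMean ν) {f g : (Fin 2 → ℝ) → ℝ}
    (hf : BddMeas f) (hg : BddMeas g) (h : ∀ x, x ≠ 0 → f x = g x) : ν f = ν g :=
  le_antisymm (hν.mono hf hg fun x hx => (h x hx).le) (hν.mono hg hf fun x hx => (h x hx).ge)

lemma measurable_quadForm (p q r : ℝ) : Measurable (quadForm p q r) := by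
  unfold quadForm; fun_prop

lemma le_freeForm (E : ℝ) (x : Fin 2 → ℝ) :
    (1 - |E|) * (x 0 ^ 2 + x 1 ^ 2) ≤ freeForm E x := by
  have h1 : 2 * E * (x 0 * x 1) ≤ |E| * (x 0 ^ 2 + x 1 ^ 2) := by
    rcases abs_cases E with ⟨h, h'⟩ | ⟨h, h'⟩ <;> rw [h]
    · nlinarith [mul_nonneg h' (sq_nonneg (x 0 - x 1))]
    · nlinarith [mul_nonneg (neg_nonneg.2 h'.le) (sq_nonneg (x 0 + x 1))]
  unfold freeForm quadForm
  linarith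

lemma sq_add_sq_pos {x : Fin 2 → ℝ} (hx : x ≠ 0) : 0 < x 0 ^ 2 + x 1 ^ 2 := by
  by_contra! h
  refine hx (funext fun i => ?_)
  fin_cases i <;> simp <;> nlinarith [sq_nonneg (x 0), sq_nonneg (x 1)]

lemma freeForm_pos {E : ℝ} (hE : E ^ 2 < 1) {x : Fin 2 → ℝ} (hx : x ≠ 0) : 0 < freeForm E x := by
  have h1 : |E| < 1 := (sq_lt_one_iff_abs_lt_one E).1 hE
  exact (mul_pos (by linarith) (sq_add_sq_pos hx)).trans_le (le_freeForm E x)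

lemma bddMeas_quadForm_div {E : ℝ} (hE : E ^ 2 < 1) (p q r : ℝ) :
    BddMeas fun x => quadForm p q r x / freeForm E x := by
  refine ⟨(measurable_quadForm _ _ _).div (measurable_quadForm _ _ _),
    (|p| + |q| + |r|) / (1 - |E|), fun x => ?_⟩
  have h1 : |E| < 1 := (sq_lt_one_iff_abs_lt_one E).1 hE
  have h1' : 0 < 1 - |E| := by linarith
  by_cases hx : x = 0
  · subst hx
    simp [quadForm]
    positivity
  have h2 := freeForm_pos hE hx
  have h3 : |quadForm p q r x| ≤ (|p| + |q| + |r|) * (x 0 ^ 2 + x 1 ^ 2) := by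
    unfold quadForm
    have h4 : |x 0 * x 1| ≤ x 0 ^ 2 + x 1 ^ 2 := by
      rw [abs_le]; constructor <;> nlinarith [sq_nonneg (x 0 - x 1), sq_nonneg (x 0 + x 1)]
    calc _ ≤ |p * x 0 ^ 2| + |q * (x 0 * x 1)| + |r * x 1 ^ 2| := abs_add_three _ _ _
      _ = |p| * x 0 ^ 2 + |q| * |x 0 * x 1| + |r| * x 1 ^ 2 := by
        simp only [abs_mul, abs_pow, sq_abs]
      _ ≤ |p| * (x 0 ^ 2 + x 1 ^ 2) + |q| * (x 0 ^ 2 + x 1 ^ 2) + |r| * (x 0 ^ 2 + x 1 ^ 2) := by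
        gcongr
        · nlinarith [sq_nonneg (x 1)]
        · nlinarith [sq_nonneg (x 0)]
      _ = _ := by ring
  rw [abs_div, abs_of_pos h2, div_le_div_iff₀ h2 h1']
  calc _ ≤ (|p| + |q| + |r|) * (x 0 ^ 2 + x 1 ^ 2) * (1 - |E|) := by gcongr
    _ = (|p| + |q| + |r|) * ((1 - |E|) * (x 0 ^ 2 + x 1 ^ 2)) := by ring
    _ ≤ _ := by gcongr; exact le_freeForm E x

lemma quadForm_mulVec (p q r : ℝ) (g : Matrix (Fin 2) (Fin 2) ℝ) (x : Fin 2 → ℝ) :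
    quadForm p q r (g *ᵥ x) = quadForm
      (p * g 0 0 ^ 2 + q * (g 0 0 * g 1 0) + r * g 1 0 ^ 2)
      (2 * p * g 0 0 * g 0 1 + q * (g 0 0 * g 1 1 + g 0 1 * g 1 0) + 2 * r * g 1 0 * g 1 1)
      (p * g 0 1 ^ 2 + q * (g 0 1 * g 1 1) + r * g 1 1 ^ 2) x := by
  simp only [quadForm, mulVec, dotProduct, Fin.sum_univ_two]
  ring

lemma freeForm_freeMat (E : ℝ) (x : Fin 2 → ℝ) : freeForm E (freeMat E *ᵥ x) = freeForm E x := by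
  rw [freeForm, quadForm_mulVec]
  simp [freeMat, quadForm]
  ring

/-- Second moments of a mean invariant under the free transfer matrix. -/
lemma mean_quadForm_div {ν : ((Fin 2 → ℝ) → ℝ) → ℝ} (hν : IsPlaneMean ν) {E : ℝ} (hE : E ^ 2 < 1)
    (hE0 : E ≠ 0) (hR : ∀ φ, BddMeas φ → ν φ = ν fun x => φ (freeMat E *ᵥ x)) (p q r : ℝ) :
    2 * (1 - E ^ 2) * ν (fun x => quadForm p q r x / freeForm E x) = p + E * q + r := by
  set m := fun p q r => ν (fun x => quadForm p q r x / freeForm E x) with hm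
  have hlin : ∀ p q r, m p q r = p * m 1 0 0 + q * m 0 1 0 + r * m 0 0 1 := fun p q r => by
    have h1 := (bddMeas_quadForm_div hE 1 0 0).smul p
    have h2 := (bddMeas_quadForm_div hE 0 1 0).smul q
    have h3 := (bddMeas_quadForm_div hE 0 0 1).smul r
    simp only [hm]
    rw [← hν.smul p (bddMeas_quadForm_div hE 1 0 0), ← hν.smul q (bddMeas_quadForm_div hE 0 1 0),
      ← hν.smul r (bddMeas_quadForm_div hE 0 0 1), ← hν.add h1 h2, ← hν.add (h1.add h2) h3]
    congr 1
    ext x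
    simp only [quadForm]
    ring
  have hone : m 1 (-(2 * E)) 1 = 1 := by
    refine (hν.congr (bddMeas_quadForm_div hE _ _ _) bddMeas_one fun x hx => ?_).trans hν.one
    exact div_self (freeForm_pos hE hx).ne'
  have hRm : ∀ p q r, m p q r = m (p * (2 * E) ^ 2 + q * (2 * E) + r) (-(4 * E * p) - q) p :=
    fun p q r => by
      have := hR _ (bddMeas_quadForm_div hE p q r)
      simp only [hm]
      rw [this]
      congr 1
      ext x
      rw [freeForm_freeMat, quadForm_mulVec]
      simp only [freeMat, of_apply, cons_val', cons_val_zero, cons_val_one, cons_val_fin_one]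
      congr 2 <;> ring
  have h1 := hRm 1 0 0
  have h2 := hRm 0 0 1
  rw [hlin] at h1 h2
  rw [hlin (_ + _) _ _] at h1
  rw [hlin (_ + _) _ _] at h2
  rw [hlin] at hone
  change 2 * (1 - E ^ 2) * m p q r = _
  rw [hlin p q r]
  have h3 : m 0 0 1 = m 1 0 0 := by linarith
  have h4 : m 0 1 0 = E * m 1 0 0 := mul_left_cancel₀ hE0 (by linarith)
  have h5 : 2 * (1 - E ^ 2) * m 1 0 0 = 1 := by rw [h3, h4] at hone; linarith
  rw [h3, h4]
  linear_combination (p + E * q + r) * h5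

lemma eq_zero_of_sq_le {E n₁ n₂ n₃ : ℝ} (hE : E ^ 2 < 1) (htr : n₁ + n₃ + E * n₂ = 0)
    (hdisc : n₂ ^ 2 ≤ 4 * (n₁ * n₃)) : n₁ = 0 ∧ n₂ = 0 := by
  have hsum : n₁ + n₃ = 0 := by
    have h1 : (n₁ + n₃) ^ 2 = E ^ 2 * n₂ ^ 2 := by
      have : n₁ + n₃ = -(E * n₂) := by linarith
      rw [this]; ring
    have h2 : (n₁ + n₃) ^ 2 ≤ E ^ 2 * (n₁ + n₃) ^ 2 := by
      have h3 := mul_le_mul_of_nonneg_left hdisc (sq_nonneg E)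
      have h4 := mul_nonneg (sq_nonneg E) (sq_nonneg (n₁ - n₃))
      linarith
    by_contra h
    have h3 : 0 < (n₁ + n₃) ^ 2 := by positivity
    linarith [mul_pos (sub_pos.2 hE) h3]
  have h3 : n₃ = -n₁ := by linarith
  rw [h3] at hdisc
  have h4 := sq_nonneg n₁
  have h5 := sq_nonneg n₂
  exact ⟨pow_eq_zero_iff two_ne_zero |>.1 (by linarith),
    pow_eq_zero_iff two_ne_zero |>.1 (by linarith)⟩

lemma sq_le_of_mean_sq_nonpos {ν : ((Fin 2 → ℝ) → ℝ) → ℝ} (hν : IsPlaneMean ν) {E : ℝ}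
    (hE : E ^ 2 < 1) (hE0 : E ≠ 0)
    (hR : ∀ φ, BddMeas φ → ν φ = ν fun x => φ (freeMat E *ᵥ x)) {n₁ n₂ n₃ : ℝ}
    (htr : n₁ + n₃ + E * n₂ = 0)
    (hN2 : ν (fun x => quadForm n₁ n₂ n₃ x / freeForm E x *
      (quadForm n₁ n₂ n₃ x / freeForm E x)) ≤ 0) : n₂ ^ 2 ≤ 4 * (n₁ * n₃) := by
  have hbN := bddMeas_quadForm_div hE n₁ n₂ n₃
  have hbN2 := hbN.mul hbN
  have hcomp := hR _ hbN2
  have hbR := hbN2.comp_mulVec (freeMat E)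
  have h1 := hν.mono (bddMeas_one.smul (E ^ 2 * (n₂ ^ 2 - 4 * (n₁ * n₃))))
    ((hbN2.add hbR).smul 2) fun x hx => by
      have h2 := freeForm_pos hE hx
      rw [freeForm_freeMat]
      have h3 : E ^ 2 * (n₂ ^ 2 - 4 * (n₁ * n₃)) * freeForm E x ^ 2 =
          quadForm n₁ n₂ n₃ x ^ 2 + quadForm n₁ n₂ n₃ (freeMat E *ᵥ x) ^ 2 -
          2 * (2 * E ^ 2 - 1) *
            (quadForm n₁ n₂ n₃ x * quadForm n₁ n₂ n₃ (freeMat E *ᵥ x)) := by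
        have h4 : n₃ = -n₁ - E * n₂ := by linarith
        rw [h4]
        simp only [quadForm_mulVec]
        simp [quadForm, freeForm, freeMat]
        ring
      have h5 : quadForm n₁ n₂ n₃ x / freeForm E x * (quadForm n₁ n₂ n₃ x / freeForm E x) +
          quadForm n₁ n₂ n₃ (freeMat E *ᵥ x) / freeForm E x *
            (quadForm n₁ n₂ n₃ (freeMat E *ᵥ x) / freeForm E x) =
          (quadForm n₁ n₂ n₃ x ^ 2 + quadForm n₁ n₂ n₃ (freeMat E *ᵥ x) ^ 2) /
            freeForm E x ^ 2 := by field_simp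
      rw [h5, mul_one, mul_div_assoc', le_div_iff₀ (by positivity), h3]
      set u := quadForm n₁ n₂ n₃ x
      set v := quadForm n₁ n₂ n₃ (freeMat E *ᵥ x)
      nlinarith [mul_nonneg (sq_nonneg E) (sq_nonneg (u + v)),
        mul_nonneg (sub_nonneg.2 hE.le) (sq_nonneg (u - v))]
  rw [hν.smul _ bddMeas_one, hν.one, hν.smul _ (hbN2.add hbR), hν.add hbN2 hbR, ← hcomp] at h1
  have hE2 : 0 < E ^ 2 := by positivity
  by_contra! h
  have h6 := mul_pos hE2 (sub_pos.2 h)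
  linarith

/-- A unimodular matrix preserving a mean that is invariant under the free transfer matrix maps the
first basis vector to a vector of the same free energy. -/
theorem freeForm_col_eq_one {ν : ((Fin 2 → ℝ) → ℝ) → ℝ} (hν : IsPlaneMean ν) {E : ℝ}
    (hE : E ^ 2 < 1) (hE0 : E ≠ 0)
    (hR : ∀ φ, BddMeas φ → ν φ = ν fun x => φ (freeMat E *ᵥ x))
    {g : Matrix (Fin 2) (Fin 2) ℝ} (hdet : g.det = 1)
    (hg : ∀ φ, BddMeas φ → ν φ = ν fun x => φ (g *ᵥ x)) :
    g 0 0 ^ 2 - 2 * E * (g 0 0 * g 1 0) + g 1 0 ^ 2 = 1 := by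
  have hd : g 0 0 * g 1 1 - g 0 1 * g 1 0 = 1 := by rw [← det_fin_two, hdet]
  obtain ⟨a, ha⟩ : ∃ a, a = g 0 0 := ⟨_, rfl⟩
  obtain ⟨b, hb⟩ : ∃ b, b = g 0 1 := ⟨_, rfl⟩
  obtain ⟨c, hc⟩ : ∃ c, c = g 1 0 := ⟨_, rfl⟩
  obtain ⟨d, hd'⟩ : ∃ d, d = g 1 1 := ⟨_, rfl⟩
  rw [← ha, ← hb, ← hc, ← hd'] at hd
  rw [← ha, ← hc]
  obtain ⟨α, hα⟩ : ∃ α, α = a ^ 2 - 2 * E * (a * c) + c ^ 2 := ⟨_, rfl⟩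
  obtain ⟨β, hβ⟩ : ∃ β, β = 2 * a * b - 2 * E * (a * d + b * c) + 2 * c * d := ⟨_, rfl⟩
  obtain ⟨δ, hδ⟩ : ∃ δ, δ = b ^ 2 - 2 * E * (b * d) + d ^ 2 := ⟨_, rfl⟩
  have hdisc : 4 * (α * δ) - β ^ 2 = 4 * (1 - E ^ 2) := by
    have : 4 * (α * δ) - β ^ 2 = 4 * (1 - E ^ 2) * (a * d - b * c) ^ 2 := by
      rw [hα, hβ, hδ]; ring
    rw [this, hd]; ring
  obtain ⟨t, ht⟩ : ∃ t, t = α + E * β + δ := ⟨_, rfl⟩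
  have hP : ∀ x, freeForm E (g *ᵥ x) = quadForm α β δ x := fun x => by
    rw [freeForm, quadForm_mulVec, ← ha, ← hb, ← hc, ← hd', hα, hβ, hδ]
    congr 1 <;> ring
  have hgx : ∀ x, x ≠ 0 → g *ᵥ x ≠ 0 := fun x hx h => hx (by
    rw [← adjugate_mulVec_mulVec hdet x, h, mulVec_zero])
  have hPpos : ∀ x, x ≠ 0 → 0 < quadForm α β δ x := fun x hx => by
    rw [← hP]; exact freeForm_pos hE (hgx x hx)
  have hQP : ∃ p q r, p + E * q + r = t ∧
      ∀ x, quadForm p q r (g *ᵥ x) = freeForm E x := by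
    refine ⟨d ^ 2 + 2 * E * (d * c) + c ^ 2, -(2 * d * b) - 2 * E * (a * d + b * c) - 2 * a * c,
      b ^ 2 + 2 * E * (a * b) + a ^ 2, ?_, fun x => ?_⟩
    · rw [ht, hα, hβ, hδ]; ring
    · rw [quadForm_mulVec, ← ha, ← hb, ← hc, ← hd', freeForm]
      congr 1
      · linear_combination (a * d - b * c + 1) * hd
      · linear_combination (-2 * E) * (a * d - b * c + 1) * hd
      · linear_combination (a * d - b * c + 1) * hd
  obtain ⟨p, q, r, hpqr, hinv⟩ := hQP
  have hbP := bddMeas_quadForm_div hE α β δ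
  have hbQ : BddMeas fun x => freeForm E x / quadForm α β δ x := by
    have := (bddMeas_quadForm_div hE p q r).comp_mulVec g
    simpa only [hinv, hP] using this
  have hmP := mean_quadForm_div hν hE hE0 hR α β δ
  have hmQ : 2 * (1 - E ^ 2) * ν (fun x => freeForm E x / quadForm α β δ x) = t := by
    have h1 := mean_quadForm_div hν hE hE0 hR p q r
    rw [hg _ (bddMeas_quadForm_div hE p q r), hpqr] at h1
    simpa only [hinv, hP] using h1
  obtain ⟨n₁, hn₁⟩ : ∃ n, n = -(2 * α * E + β) := ⟨_, rfl⟩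
  obtain ⟨n₂, hn₂⟩ : ∃ n, n = 2 * (α - δ) := ⟨_, rfl⟩
  obtain ⟨n₃, hn₃⟩ : ∃ n, n = β + 2 * E * δ := ⟨_, rfl⟩
  have hN : ∀ x, quadForm n₁ n₂ n₃ x ^ 2 = 4 * t * (quadForm α β δ x * freeForm E x) -
      4 * (1 - E ^ 2) * (quadForm α β δ x ^ 2 + freeForm E x ^ 2) := fun x => by
    have h0 : 4 * (1 - E ^ 2) = 4 * (α * δ) - β ^ 2 := hdisc.symm
    simp only [quadForm, freeForm, hn₁, hn₂, hn₃, ht]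
    linear_combination
      ((x 0 ^ 2 + -(2 * E) * (x 0 * x 1) + x 1 ^ 2) ^ 2) * h0
  have hbN := bddMeas_quadForm_div hE n₁ n₂ n₃
  have hbN2 := hbN.mul hbN
  have hbNP := hbN2.mul hbQ
  have hNP : ν (fun x => quadForm n₁ n₂ n₃ x / freeForm E x *
      (quadForm n₁ n₂ n₃ x / freeForm E x) * (freeForm E x / quadForm α β δ x)) = 0 := by
    have h1 : ν (fun x => quadForm n₁ n₂ n₃ x / freeForm E x *
        (quadForm n₁ n₂ n₃ x / freeForm E x) * (freeForm E x / quadForm α β δ x)) =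
        ν fun x => 4 * t * 1 + -(4 * (1 - E ^ 2)) * (quadForm α β δ x / freeForm E x +
          freeForm E x / quadForm α β δ x) := by
      refine hν.congr hbNP ((bddMeas_one.smul _).add ((hbP.add hbQ).smul _)) fun x hx => ?_
      have h2 := (freeForm_pos hE hx).ne'
      have h3 := (hPpos x hx).ne'
      have h4 := hN x
      field_simp
      rw [h4]
      ring
    rw [h1, hν.add (bddMeas_one.smul _) ((hbP.add hbQ).smul _), hν.smul _ bddMeas_one, hν.one,
      hν.smul _ (hbP.add hbQ), hν.add hbP hbQ]
    rw [← ht] at hmP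
    linear_combination (-2) * hmP - 2 * hmQ
  have hN2 : ν (fun x => quadForm n₁ n₂ n₃ x / freeForm E x *
      (quadForm n₁ n₂ n₃ x / freeForm E x)) ≤ 0 := by
    obtain ⟨K, hK⟩ := hbP.2
    have h1 := hν.mono hbN2 (hbNP.smul K) fun x hx => by
      have h2 := freeForm_pos hE hx
      have h3 := hPpos x hx
      have h4 := (abs_le.1 (hK x)).2
      rw [div_le_iff₀ h2] at h4
      have h5 : 1 ≤ K * (freeForm E x / quadForm α β δ x) := by
        rw [mul_div_assoc', le_div_iff₀ h3]; linarith
      nlinarith [mul_le_mul_of_nonneg_left h5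
        (mul_self_nonneg (quadForm n₁ n₂ n₃ x / freeForm E x))]
    rw [hν.smul _ hbNP, hNP, mul_zero] at h1
    exact h1
  have htr : n₁ + n₃ + E * n₂ = 0 := by rw [hn₁, hn₂, hn₃]; ring
  have hdisc2 := sq_le_of_mean_sq_nonpos hν hE hE0 hR htr hN2
  obtain ⟨h1, h2⟩ := eq_zero_of_sq_le hE htr hdisc2
  have hδα : δ = α := by linarith
  have hβα : β = -(2 * α * E) := by linarith
  rw [hδα, hβα] at hdisc
  have hα2 : α ^ 2 = 1 := mul_left_cancel₀ (sub_pos.2 hE).ne' (by linarith)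
  have hαnn : 0 ≤ α := by
    rw [hα]
    nlinarith [sq_nonneg (a - E * c), mul_nonneg (sub_nonneg.2 hE.le) (sq_nonneg c)]
  rw [← hα]
  exact (sq_eq_sq₀ hαnn zero_le_one).1 (by rw [hα2, one_pow])

noncomputable section

open Polynomial in
/-- The transfer matrix across `a → b` as a polynomial in the energy. -/
def polyStep (a b : ℕ) : Matrix (Fin 2) (Fin 2) ℝ[X] :=
  !![C (((b : ℝ) + a) / b) * X, -C ((a : ℝ) / b); 1, 0]

open Polynomial in
/-- `PolyPath Ed a b g`: the matrix `g` is the transfer matrix along some path from `a` to `b`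
with transitions in `Ed`. -/
inductive PolyPath (Ed : ℕ → ℕ → Prop) (a : ℕ) : ℕ → Matrix (Fin 2) (Fin 2) ℝ[X] → Prop
  | refl : PolyPath Ed a a 1
  | step {b c : ℕ} {g : Matrix (Fin 2) (Fin 2) ℝ[X]} :
      PolyPath Ed a b g → Ed b c → PolyPath Ed a c (polyStep b c * g)

open Polynomial in
/-- Evaluation of a polynomial matrix at the energy `E`. -/
def evalMat (E : ℝ) : Matrix (Fin 2) (Fin 2) ℝ[X] →+* Matrix (Fin 2) (Fin 2) ℝ :=
  (evalRingHom E).mapMatrix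

/-- The transition `a → b` has positive probability. -/
def PosEdge (μ : Measure (ℤ → ℕ)) (a b : ℕ) : Prop := μ {ω | ω 0 = a ∧ ω 1 = b} ≠ 0

end

lemma evalMat_polyStep (E : ℝ) (a b : ℕ) : evalMat E (polyStep a b) = stepMat E a b := by
  ext i j
  fin_cases i <;> fin_cases j <;> simp [evalMat, polyStep, stepMat]

section PolyPath

variable {Ed : ℕ → ℕ → Prop} {a b c : ℕ} {g h : Matrix (Fin 2) (Fin 2) (Polynomial ℝ)}

lemma PolyPath.trans (hg : PolyPath Ed a b g) (hh : PolyPath Ed b c h) :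
    PolyPath Ed a c (h * g) := by
  induction hh with
  | refl => simpa using hg
  | step _ he ih => rw [Matrix.mul_assoc]; exact ih.step he

lemma PolyPath.target {P : ℕ → Prop} (hEd : ∀ a b, Ed a b → P b) (ha : P a)
    (hg : PolyPath Ed a b g) : P b := by
  cases hg with
  | refl => exact ha
  | step _ he => exact hEd _ _ he

lemma PolyPath.det_mul {ℓ : ℕ} (hEd : ∀ a b, Ed a b → 1 ≤ b ∧ b ≤ ℓ) (E : ℝ)
    (hg : PolyPath Ed a b g) : (evalMat E g).det * b = a := by
  induction hg with
  | refl => simp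
  | @step b c g _ he ih =>
    have hc : (c : ℝ) ≠ 0 := by have := (hEd _ _ he).1; positivity
    rw [map_mul, evalMat_polyStep, Matrix.det_mul, ← ih, stepMat, det_fin_two_of]
    field_simp
    ring

/-- Propagation of invariance along paths. -/
lemma PolyPath.mean_eq {ℓ : ℕ} {E : ℝ} {ν : ℕ → ((Fin 2 → ℝ) → ℝ) → ℝ}
    (hEd : ∀ a b, Ed a b → 1 ≤ b ∧ b ≤ ℓ) (ha : 1 ≤ a ∧ a ≤ ℓ)
    (hν : ∀ a b, Ed a b → ∀ φ, BddMeas φ → ν b φ = ν a fun x => φ (unimodStep ℓ E a b *ᵥ x))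
    (hg : PolyPath Ed a b g) {φ : (Fin 2 → ℝ) → ℝ} (hφ : BddMeas φ) :
    ν b φ = ν a fun x => φ ((√((b : ℝ) / a) • evalMat E g) *ᵥ x) := by
  induction hg generalizing φ with
  | refl =>
    have h : (a : ℝ) ≠ 0 := by have := ha.1; positivity
    simp [div_self h]
  | @step b c g hg he ih =>
    have hb := hg.target hEd ha
    have hc := hEd _ _ he
    have ha' : (0 : ℝ) < a := by exact_mod_cast ha.1
    have hb' : (0 : ℝ) < b := by exact_mod_cast hb.1
    rw [hν b c he φ hφ, ih (hφ.comp_mulVec _)]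
    congr 1
    ext x
    rw [mulVec_mulVec, unimodStep, if_pos ⟨hb, hc⟩, map_mul, evalMat_polyStep, smul_mul_smul_comm,
      ← Real.sqrt_mul (by positivity)]
    congr 4
    field_simp

end PolyPath

lemma stepMat_self (E : ℝ) {j : ℕ} (hj : 1 ≤ j) : stepMat E j j = freeMat E := by
  have : (j : ℝ) ≠ 0 := by positivity
  unfold stepMat freeMat
  congr 3
  · field_simp; ring
  · rw [div_self this]

section Loops

variable {ℓ : ℕ} {W : Set (ℕ × ℕ)} {μ : Measure (ℤ → ℕ)}

lemma posEdge_letters (hconc : μ (SFT ℓ W)ᶜ = 0) {a b : ℕ} (h : PosEdge μ a b) :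
    (1 ≤ a ∧ a ≤ ℓ) ∧ 1 ≤ b ∧ b ≤ ℓ := by
  by_contra hn
  refine h (measure_mono_null (t := (SFT ℓ W)ᶜ) (fun ω hω hS => hn ?_) hconc)
  rw [← hω.1, ← hω.2]
  exact ⟨hS.1 0, hS.1 1⟩

lemma measure_letter_ne_zero_of_posEdge {a b : ℕ} (h : PosEdge μ a b) : μ {ω | ω 0 = a} ≠ 0 :=
  fun h0 => h (measure_mono_null (fun _ hω => hω.1) h0)

variable [IsProbabilityMeasure μ]

/-- The transfer matrix of a loop based at the fixed letter preserves the free energy of the first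
basis vector, as soon as the Lyapunov exponent vanishes at that energy. -/
lemma loop_col_eq_one_of_lyapunov (hconc : μ (SFT ℓ W)ᶜ = 0) (hμ : MeasurePreserving shift μ μ)
    (hlps : LocalProductStructure ℓ W μ) {k : ℝ}
    (hk : Tendsto (fun n : ℕ => (1 / (n : ℝ)) * ∫ ω, Real.log ‖AIter k ω n‖ ∂μ) atTop (𝓝 0))
    (hE : Real.cos k ^ 2 < 1) (hE0 : Real.cos k ≠ 0) {j : ℕ} (hj : PosEdge μ j j)
    {g : Matrix (Fin 2) (Fin 2) (Polynomial ℝ)} (hg : PolyPath (PosEdge μ) j j g) :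
    evalMat (Real.cos k) g 0 0 ^ 2 - 2 * Real.cos k * (evalMat (Real.cos k) g 0 0 *
      evalMat (Real.cos k) g 1 0) + evalMat (Real.cos k) g 1 0 ^ 2 = 1 := by
  obtain ⟨F, hF⟩ := exists_frobSq_unimodStep_le ℓ (Real.cos k)
  obtain ⟨ν, hν, hinv⟩ := exists_invariant_mean hconc hlps hμ (det_unimodStep ℓ _) hF
    (tendsto_integral_log_frobSq hconc hμ hk)
  have hjl := posEdge_letters hconc hj
  have hEd : ∀ a b, PosEdge μ a b → 1 ≤ b ∧ b ≤ ℓ := fun a b h => (posEdge_letters hconc h).2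
  have hj0 : (j : ℝ) ≠ 0 := by have := hjl.1.1; positivity
  refine freeForm_col_eq_one (hν j (measure_letter_ne_zero_of_posEdge hj)) hE hE0 (fun φ hφ => ?_)
    ?_ fun φ hφ => ?_
  · rw [hinv j j hj φ hφ, unimodStep, if_pos hjl, stepMat_self _ hjl.1.1, div_self hj0,
      Real.sqrt_one, one_smul]
  · exact mul_right_cancel₀ hj0 (by rw [hg.det_mul hEd, one_mul])
  · have := hg.mean_eq hEd hjl.1 hinv hφ
    simpa [div_self hj0] using this

open Polynomial in
lemma loop_col_eq_one (hconc : μ (SFT ℓ W)ᶜ = 0) (hμ : MeasurePreserving shift μ μ)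
    (hlps : LocalProductStructure ℓ W μ) {L : ℝ → ℝ}
    (hL : ∀ k : ℝ, Tendsto (fun n : ℕ => (1 / (n : ℝ)) * ∫ ω, Real.log ‖AIter k ω n‖ ∂μ)
      atTop (𝓝 (L k)))
    (hinf : {k ∈ Icc (0 : ℝ) π | L k = 0}.Infinite) {j : ℕ} (hj : PosEdge μ j j)
    {g : Matrix (Fin 2) (Fin 2) ℝ[X]} (hg : PolyPath (PosEdge μ) j j g) (E : ℝ) :
    evalMat E g 0 0 ^ 2 - 2 * E * (evalMat E g 0 0 * evalMat E g 1 0) + evalMat E g 1 0 ^ 2 = 1 := by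
  have hpoly : g 0 0 ^ 2 - 2 * X * (g 0 0 * g 1 0) + g 1 0 ^ 2 = 1 := by
    refine eq_of_infinite_eval_eq _ _ ?_
    have h1 : (Real.cos '' {k ∈ Icc (0 : ℝ) π | L k = 0}).Infinite :=
      hinf.image (Real.injOn_cos.mono fun _ h => h.1)
    have h2 : ((Real.cos '' {k ∈ Icc (0 : ℝ) π | L k = 0}) \ {0, 1, -1}).Infinite :=
      h1.sdiff (toFinite _)
    refine h2.mono ?_
    rintro _ ⟨⟨k, ⟨-, hk⟩, rfl⟩, hne⟩
    simp only [mem_insert_iff, mem_singleton_iff, not_or] at hne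
    have hlt : Real.cos k ^ 2 < 1 := (Real.cos_sq_le_one k).lt_of_ne fun h =>
      ((sq_eq_sq_iff_eq_or_eq_neg).1 (h.trans (one_pow 2).symm)).elim hne.2.1 hne.2.2
    have := loop_col_eq_one_of_lyapunov hconc hμ hlps (hk ▸ hL k) hlt hne.1 hj hg
    simpa [evalMat] using this
  have := congrArg (eval E) hpoly
  simpa [evalMat] using this

end Loops

section Connectivity

variable {μ : Measure (ℤ → ℕ)}

lemma ae_posEdge : ∀ᵐ ω ∂μ, PosEdge μ (ω 0) (ω 1) := by
  have h : ∀ x : ℕ × ℕ, ∀ᵐ ω ∂μ, (ω 0 = x.1 ∧ ω 1 = x.2) → PosEdge μ x.1 x.2 := fun x => by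
    by_cases hx : PosEdge μ x.1 x.2
    · exact ae_of_all _ fun _ _ => hx
    · have h0 : μ {ω | ω 0 = x.1 ∧ ω 1 = x.2} = 0 := not_not.1 hx
      filter_upwards [measure_eq_zero_iff_ae_notMem.1 h0] with ω hω hω'
      exact absurd hω' hω
  filter_upwards [ae_all_iff.2 h] with ω hω
  exact hω (ω 0, ω 1) ⟨rfl, rfl⟩

lemma measurableSet_letter (P : ℕ → Prop) : MeasurableSet {ω : ℤ → ℕ | P (ω 0)} :=
  (measurable_pi_apply (X := fun _ : ℤ => ℕ) 0) (MeasurableSet.of_discrete (s := {a | P a}))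

lemma forall_letter_of_ae_univ {P : ℕ → Prop} {j : ℕ} (hj : μ {ω | ω 0 = j} ≠ 0) (hPj : P j)
    (h : {ω : ℤ → ℕ | P (ω 0)} =ᵐ[μ] (∅ : Set (ℤ → ℕ)) ∨
      {ω : ℤ → ℕ | P (ω 0)} =ᵐ[μ] (univ : Set (ℤ → ℕ)))
    {b : ℕ} (hb : μ {ω | ω 0 = b} ≠ 0) : P b := by
  rcases h with h | h
  · refine absurd (measure_mono_null (fun ω hω => ?_) (ae_eq_empty.1 h)) hj
    change P (ω 0)
    rw [hω]
    exact hPj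
  · by_contra hn
    refine hb (measure_mono_null (fun ω hω => ?_) (ae_eq_univ.1 h))
    change ¬ P (ω 0)
    rw [hω]
    exact hn

variable [IsProbabilityMeasure μ]

lemma exists_polyPath_from (herg : Ergodic shift μ) {j b : ℕ} (hj : μ {ω | ω 0 = j} ≠ 0)
    (hb : μ {ω | ω 0 = b} ≠ 0) : ∃ g, PolyPath (PosEdge μ) j b g := by
  refine forall_letter_of_ae_univ (P := fun b => ∃ g, PolyPath (PosEdge μ) j b g) hj ⟨1, .refl⟩
    (herg.ae_empty_or_univ_of_ae_le_preimage
      (measurableSet_letter fun b => ∃ g, PolyPath (PosEdge μ) j b g).nullMeasurableSet ?_) hb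
  filter_upwards [ae_posEdge (μ := μ)] with ω hω hS
  obtain ⟨g, hg⟩ := hS
  exact ⟨_, hg.step hω⟩

lemma exists_polyPath_to (herg : Ergodic shift μ) {j b : ℕ} (hj : μ {ω | ω 0 = j} ≠ 0)
    (hb : μ {ω | ω 0 = b} ≠ 0) : ∃ g, PolyPath (PosEdge μ) b j g := by
  refine forall_letter_of_ae_univ (P := fun b => ∃ g, PolyPath (PosEdge μ) b j g) hj ⟨1, .refl⟩
    (herg.ae_empty_or_univ_of_preimage_ae_le
      (measurableSet_letter fun b => ∃ g, PolyPath (PosEdge μ) b j g).nullMeasurableSet ?_) hb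
  filter_upwards [ae_posEdge (μ := μ)] with ω hω hS
  obtain ⟨g, hg⟩ := hS
  exact ⟨_, (PolyPath.refl.step hω).trans hg⟩

end Connectivity

lemma posEdge_of_mem {ℓ : ℕ} {W : Set (ℕ × ℕ)} {μ : Measure (ℤ → ℕ)} (hsupp : FullSupport ℓ W μ)
    {p : ℤ → ℕ} (hp : p ∈ SFT ℓ W) (n : ℤ) : PosEdge μ (p n) (p (n + 1)) := by
  refine (hsupp {ω | ω 0 = p n ∧ ω 1 = p (n + 1)} ?_ ⟨fun m => p (m + n),
    ⟨by simp, by simp [add_comm]⟩, fun m => hp.1 _, fun m => ?_⟩).ne'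
  · exact ((isOpen_discrete {p n}).preimage (continuous_apply (A := fun _ : ℤ => ℕ) 0)).inter
      ((isOpen_discrete {p (n + 1)}).preimage (continuous_apply (A := fun _ : ℤ => ℕ) 1))
  · have := hp.2 (m + n)
    rwa [add_right_comm] at this

/-- Along any sequence of the subshift, and at any energy in `(-1, 1)`, there is a generalized
eigenfunction on the half-line which is bounded above and away from zero. -/
lemma exists_bounded_solution {ℓ : ℕ} {W : Set (ℕ × ℕ)} {μ : Measure (ℤ → ℕ)}
    [IsProbabilityMeasure μ] (hconc : μ (SFT ℓ W)ᶜ = 0) (herg : Ergodic shift μ)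
    (hlps : LocalProductStructure ℓ W μ) (hsupp : FullSupport ℓ W μ)
    (hfix : ∃ q ∈ SFT ℓ W, shift q = q) {L : ℝ → ℝ}
    (hL : ∀ k : ℝ, Tendsto (fun n : ℕ => (1 / (n : ℝ)) * ∫ ω, Real.log ‖AIter k ω n‖ ∂μ)
      atTop (𝓝 (L k)))
    (hinf : {k ∈ Icc (0 : ℝ) π | L k = 0}.Infinite) {p : ℤ → ℕ} (hp : p ∈ SFT ℓ W) {E : ℝ}
    (hE : E ^ 2 < 1) :
    ∃ (u : ℕ → ℝ) (c C : ℝ), 0 < c ∧ (∀ n : ℕ, c ≤ u n ^ 2 + u (n + 1) ^ 2) ∧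
      (∀ n, u n ^ 2 + u (n + 1) ^ 2 ≤ C) ∧ ∀ n : ℕ, (p (n + 1) : ℝ) * u (n + 2) + p n * u n =
        (p (n + 1) + p n) * E * u (n + 1) := by
  obtain ⟨q, hq, hqs⟩ := hfix
  have hj : PosEdge μ (q 0) (q 0) := by
    have h1 := posEdge_of_mem hsupp hq 0
    have h2 : q (0 + 1) = q 0 := congrFun hqs 0
    rwa [h2] at h1
  set j := q 0
  have hj1 : (1 : ℝ) ≤ j := by exact_mod_cast (posEdge_letters hconc hj).1.1
  have hj0 := measure_letter_ne_zero_of_posEdge hj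
  have hpe : ∀ n : ℕ, PosEdge μ (p n) (p (n + 1)) := fun n => posEdge_of_mem hsupp hp n
  have hEd : ∀ a b, PosEdge μ a b → 1 ≤ b ∧ b ≤ ℓ := fun a b h => (posEdge_letters hconc h).2
  have hback : ∀ b : ℕ, ∃ g, μ {ω | ω 0 = b} ≠ 0 → PolyPath (PosEdge μ) b j g := fun b => by
    by_cases hb : μ {ω | ω 0 = b} ≠ 0
    · obtain ⟨g, hg⟩ := exists_polyPath_to herg hj0 hb
      exact ⟨g, fun _ => hg⟩
    · exact ⟨1, fun h => absurd h hb⟩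
  choose v hv using hback
  obtain ⟨F, hF⟩ := ((Finset.Icc 1 ℓ).image fun b => frobSq (evalMat E (v b))).bddAbove
  have hF' : ∀ n, frobSq (evalMat E (v (p n))) ≤ F := fun n => hF (by
    simp only [Finset.coe_image, Finset.coe_Icc]
    exact ⟨p n, hp.1 n, rfl⟩)
  obtain ⟨g₀, hg₀⟩ := exists_polyPath_from herg hj0
    (measure_letter_ne_zero_of_posEdge (hpe 0))
  let Y : ℕ → Matrix (Fin 2) (Fin 2) (Polynomial ℝ) :=
    fun n => Nat.rec g₀ (fun n g => polyStep (p n) (p (n + 1)) * g) n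
  have hYs : ∀ n : ℕ, Y (n + 1) = polyStep (p n) (p (n + 1)) * Y n := fun n => rfl
  have hY : ∀ n : ℕ, PolyPath (PosEdge μ) j (p n) (Y n) := fun n => by
    induction n with
    | zero => exact hg₀
    | succ n ih => rw [hYs]; push_cast; exact ih.step (hpe n)
  let x : ℕ → Fin 2 → ℝ := fun n i => evalMat E (Y n) i 0
  have hx : ∀ n : ℕ, x (n + 1) = stepMat E (p n) (p (n + 1)) *ᵥ x n := fun n => by
    ext i
    simp only [x, hYs, map_mul, evalMat_polyStep, mul_apply, mulVec, dotProduct]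
  have hx1 : ∀ n, x (n + 1) 1 = x n 0 := fun n => by
    rw [hx]; simp [stepMat, mulVec, dotProduct, Fin.sum_univ_two]
  have hE1 : |E| < 1 := (sq_lt_one_iff_abs_lt_one E).1 hE
  have hform : ∀ n : ℕ, freeForm E (evalMat E (v (p n)) *ᵥ x n) = 1 := fun n => by
    have h1 := loop_col_eq_one hconc herg.toMeasurePreserving hlps hL hinf hj
      ((hY n).trans (hv _ (measure_letter_ne_zero_of_posEdge (hpe n)))) E
    have h2 : ∀ i, evalMat E (v (p n) * Y n) i 0 = (evalMat E (v (p n)) *ᵥ x n) i := fun i => by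
      simp only [x, map_mul, mul_apply, mulVec, dotProduct]
    rw [h2, h2] at h1
    rw [← h1, freeForm, quadForm]
    ring
  have hlow : ∀ n, 1 ≤ 2 * F * normSqVec (x n) := fun n => by
    set y := evalMat E (v (p n)) *ᵥ x n with hy
    have h1 : freeForm E y ≤ 2 * normSqVec y := by
      have h2 := le_freeForm (-E) y
      rw [abs_neg] at h2
      unfold freeForm quadForm at h2 ⊢
      unfold normSqVec
      nlinarith [sq_nonneg (y 0), sq_nonneg (y 1)]
    have h3 := normSqVec_mulVec_le (evalMat E (v (p n))) (x n)
    have h4 := mul_le_mul_of_nonneg_right (hF' n) (normSqVec_nonneg (x n))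
    rw [hform n] at h1
    linarith
  have hFpos : 0 < F := by
    by_contra! h
    linarith [hlow 0, mul_nonneg (neg_nonneg.2 h) (normSqVec_nonneg (x 0))]
  have hupp : ∀ n, normSqVec (x n) ≤ (j : ℝ) ^ 2 * F / (1 - |E|) := fun n => by
    set V := evalMat E (v (p n)) with hV
    have hdet := (hv _ (measure_letter_ne_zero_of_posEdge (hpe n))).det_mul hEd E
    rw [← hV] at hdet
    have h1 : V.adjugate *ᵥ (V *ᵥ x n) = V.det • x n := by
      rw [mulVec_mulVec, adjugate_mul, smul_mulVec, one_mulVec]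
    have h2 := normSqVec_mulVec_le V.adjugate (V *ᵥ x n)
    rw [h1, frobSq_adjugate] at h2
    have h3 : normSqVec (V.det • x n) = V.det ^ 2 * normSqVec (x n) := by
      simp [normSqVec]; ring
    have h4 := le_freeForm E (V *ᵥ x n)
    rw [hform n] at h4
    change (1 - |E|) * normSqVec _ ≤ 1 at h4
    have hp1 : (1 : ℝ) ≤ p n := by exact_mod_cast (hp.1 n).1
    have hE2 : 0 < 1 - |E| := by linarith
    rw [le_div_iff₀ hE2]
    have h5 : 1 ≤ V.det ^ 2 * (j : ℝ) ^ 2 := by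
      rw [← mul_pow, hdet]; nlinarith
    calc normSqVec (x n) * (1 - |E|)
        ≤ (V.det ^ 2 * (j : ℝ) ^ 2) * (normSqVec (x n) * (1 - |E|)) :=
          le_mul_of_one_le_left (mul_nonneg (normSqVec_nonneg _) hE2.le) h5
      _ = (j : ℝ) ^ 2 * (normSqVec (V.det • x n) * (1 - |E|)) := by rw [h3]; ring
      _ ≤ (j : ℝ) ^ 2 * (frobSq V * normSqVec (V *ᵥ x n) * (1 - |E|)) := by gcongr
      _ = (j : ℝ) ^ 2 * (frobSq V * ((1 - |E|) * normSqVec (V *ᵥ x n))) := by ring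
      _ ≤ (j : ℝ) ^ 2 * (F * 1) := by
        gcongr
        · exact mul_nonneg hE2.le (normSqVec_nonneg _)
        · exact hF' n
      _ = _ := by ring
  have hnorm : ∀ n, x n 1 ^ 2 + x (n + 1) 1 ^ 2 = normSqVec (x n) := fun n => by
    rw [hx1, normSqVec, add_comm]
  refine ⟨fun n => x n 1, 1 / (2 * F), (j : ℝ) ^ 2 * F / (1 - |E|), by positivity, fun n => ?_,
    fun n => ?_, fun n => ?_⟩
  · rw [hnorm, div_le_iff₀ (by positivity)]
    linarith [hlow n]
  · rw [hnorm]; exact hupp n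
  · have hpn : (p (n + 1) : ℝ) ≠ 0 := by have := (hp.1 (n + 1)).1; positivity
    have h1 : x (n + 2) 1 = ((p (n + 1) : ℝ) + p n) / p (n + 1) * E * x (n + 1) 1 -
        (p n : ℝ) / p (n + 1) * x n 1 := by
      rw [hx1, hx1, hx]
      simp [stepMat, mulVec, dotProduct, Fin.sum_univ_two]
      ring
    simp only [h1]
    field_simp
    ring

lemma hasSum_sq_norm (u : L2Z) : HasSum (fun n => (u : ∀ _ : ℤ, ℝ) n ^ 2) (‖u‖ ^ 2) := by
  have h := lp.hasSum_inner (𝕜 := ℝ) u u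
  rw [real_inner_self_eq_norm_sq] at h
  refine h.congr_fun ?_
  intro n
  simp [sq]

/-- The operator contracts the `ℓ²` norm weighted by `p n + p (n - 1)`. -/
lemma weighted_tsum_le {ℓ : ℕ} {p : ℤ → ℕ} (hp : ∀ n, 1 ≤ p n ∧ p n ≤ ℓ) {H : L2Z →L[ℝ] L2Z}
    (hH : IsJacobiOp p H) (u : L2Z) :
    ∑' n, ((p n : ℝ) + p (n - 1)) * (H u : ∀ _ : ℤ, ℝ) n ^ 2 ≤
      ∑' n, ((p n : ℝ) + p (n - 1)) * (u : ∀ _ : ℤ, ℝ) n ^ 2 := by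
  have hp1 : ∀ n, (1 : ℝ) ≤ p n := fun n => by exact_mod_cast (hp n).1
  have hpl : ∀ n, (p n : ℝ) ≤ ℓ := fun n => by exact_mod_cast (hp n).2
  have hsum : ∀ (v : L2Z) (w : ℤ → ℝ), (∀ n, 0 ≤ w n) → (∀ n, w n ≤ 2 * ℓ) →
      Summable fun n => w n * (v : ∀ _ : ℤ, ℝ) n ^ 2 := fun v w h0 h1 =>
    Summable.of_nonneg_of_le (fun n => mul_nonneg (h0 n) (sq_nonneg _))
      (fun n => mul_le_mul_of_nonneg_right (h1 n) (sq_nonneg _))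
      ((hasSum_sq_norm v).summable.mul_left _)
  have ha := hsum u (fun n => p (n - 1)) (fun n => by positivity) fun n => by
    linarith [hpl (n - 1), hp1 (n - 1)]
  have hb := hsum u (fun n => p n) (fun n => by positivity) fun n => by linarith [hpl n, hp1 n]
  have ha' : Summable fun n => (p n : ℝ) * (u : ∀ _ : ℤ, ℝ) (n + 1) ^ 2 := by
    have := (Equiv.addRight (1 : ℤ)).summable_iff.2 ha
    simpa [Function.comp_def] using this
  have hb' : Summable fun n => (p (n - 1) : ℝ) * (u : ∀ _ : ℤ, ℝ) (n - 1) ^ 2 := by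
    have := (Equiv.addRight (-1 : ℤ)).summable_iff.2 hb
    simpa [Function.comp_def, ← sub_eq_add_neg] using this
  have hta : ∑' n, (p n : ℝ) * (u : ∀ _ : ℤ, ℝ) (n + 1) ^ 2 =
      ∑' n, (p (n - 1) : ℝ) * (u : ∀ _ : ℤ, ℝ) n ^ 2 := by
    have := (Equiv.addRight (1 : ℤ)).tsum_eq fun n => (p (n - 1) : ℝ) * (u : ∀ _ : ℤ, ℝ) n ^ 2
    simpa using this
  have htb : ∑' n, (p (n - 1) : ℝ) * (u : ∀ _ : ℤ, ℝ) (n - 1) ^ 2 =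
      ∑' n, (p n : ℝ) * (u : ∀ _ : ℤ, ℝ) n ^ 2 := by
    have := (Equiv.addRight (-1 : ℤ)).tsum_eq fun n => (p n : ℝ) * (u : ∀ _ : ℤ, ℝ) n ^ 2
    simpa [← sub_eq_add_neg] using this
  calc _ ≤ ∑' n, ((p n : ℝ) * (u : ∀ _ : ℤ, ℝ) (n + 1) ^ 2 +
        (p (n - 1) : ℝ) * (u : ∀ _ : ℤ, ℝ) (n - 1) ^ 2) := by
        refine Summable.tsum_le_tsum (fun n => ?_)
          (hsum (H u) _ (fun n => by positivity) fun n => by linarith [hpl n, hpl (n - 1)])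
          (ha'.add hb')
        rw [hH u n]
        set a := (p n : ℝ) with ha
        set b := (p (n - 1) : ℝ) with hb
        set x := (u : ∀ _ : ℤ, ℝ) (n + 1)
        set y := (u : ∀ _ : ℤ, ℝ) (n - 1)
        have h1 : 0 < a := by linarith [hp1 n]
        have h2 : 0 < b := by linarith [hp1 (n - 1)]
        have h3 : (a + b) * (a / (a + b) * x + b / (a + b) * y) ^ 2 =
            (a * x + b * y) ^ 2 / (a + b) := by field_simp
        rw [h3, div_le_iff₀ (by positivity)]
        nlinarith [mul_nonneg (mul_pos h1 h2).le (sq_nonneg (x - y))]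
    _ = _ := by
        rw [ha'.tsum_add hb', hta, htb, ← ha.tsum_add hb]
        exact tsum_congr fun n => by ring

lemma norm_jacobi_pow_le {ℓ : ℕ} {p : ℤ → ℕ} (hp : ∀ n, 1 ≤ p n ∧ p n ≤ ℓ) {H : L2Z →L[ℝ] L2Z}
    (hH : IsJacobiOp p H) (m : ℕ) : ‖H ^ m‖ ≤ √ℓ := by
  refine ContinuousLinearMap.opNorm_le_bound _ (Real.sqrt_nonneg _) fun u => ?_
  have hp1 : ∀ n, (1 : ℝ) ≤ p n := fun n => by exact_mod_cast (hp n).1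
  have hpl : ∀ n, (p n : ℝ) ≤ ℓ := fun n => by exact_mod_cast (hp n).2
  have hupper : ∀ v : L2Z, Summable (fun n => ((p n : ℝ) + p (n - 1)) * (v : ∀ _ : ℤ, ℝ) n ^ 2) ∧
      ∑' n, ((p n : ℝ) + p (n - 1)) * (v : ∀ _ : ℤ, ℝ) n ^ 2 ≤ 2 * ℓ * ‖v‖ ^ 2 := fun v => by
    have h1 := (hasSum_sq_norm v).mul_left (2 * (ℓ : ℝ))
    have h2 : ∀ n, ((p n : ℝ) + p (n - 1)) * (v : ∀ _ : ℤ, ℝ) n ^ 2 ≤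
        2 * ℓ * (v : ∀ _ : ℤ, ℝ) n ^ 2 := fun n =>
      mul_le_mul_of_nonneg_right (by linarith [hpl n, hpl (n - 1)]) (sq_nonneg _)
    have h3 := Summable.of_nonneg_of_le (fun n => by positivity) h2 h1.summable
    exact ⟨h3, (h3.tsum_le_tsum h2 h1.summable).trans h1.tsum_eq.le⟩
  have hlower : ∀ v : L2Z,
      2 * ‖v‖ ^ 2 ≤ ∑' n, ((p n : ℝ) + p (n - 1)) * (v : ∀ _ : ℤ, ℝ) n ^ 2 := fun v => by
    have h1 := (hasSum_sq_norm v).mul_left 2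
    rw [← h1.tsum_eq]
    exact h1.summable.tsum_le_tsum (fun n => mul_le_mul_of_nonneg_right
      (by linarith [hp1 n, hp1 (n - 1)]) (sq_nonneg _)) (hupper v).1
  have hmono : ∑' n, ((p n : ℝ) + p (n - 1)) * ((H ^ m) u : ∀ _ : ℤ, ℝ) n ^ 2 ≤
      ∑' n, ((p n : ℝ) + p (n - 1)) * (u : ∀ _ : ℤ, ℝ) n ^ 2 := by
    induction m with
    | zero => simp
    | succ m ih =>
      rw [pow_succ']
      exact (weighted_tsum_le hp hH ((H ^ m) u)).trans ih
  refine (sq_le_sq₀ (norm_nonneg _) (by positivity)).1 ?_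
  rw [mul_pow, Real.sq_sqrt (Nat.cast_nonneg _)]
  linarith [hlower ((H ^ m) u), (hupper u).2]

lemma spectrum_subset_Icc {ℓ : ℕ} {p : ℤ → ℕ} (hp : ∀ n, 1 ≤ p n ∧ p n ≤ ℓ) {H : L2Z →L[ℝ] L2Z}
    (hH : IsJacobiOp p H) : spectrum ℝ H ⊆ Icc (-1 : ℝ) 1 := by
  intro E hE
  refine abs_le.1 ?_
  by_contra! h
  obtain ⟨m, hm⟩ := pow_unbounded_of_one_lt (√ℓ) h
  have h1 := spectrum.norm_le_norm_mul_of_mem (spectrum.pow_mem_pow H m hE)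
  have h2 : ‖(1 : L2Z →L[ℝ] L2Z)‖ ≤ 1 := ContinuousLinearMap.norm_id_le
  rw [norm_pow, Real.norm_eq_abs] at h1
  have h3 := mul_le_mul (norm_jacobi_pow_le hp hH m) h2 (norm_nonneg _) (Real.sqrt_nonneg _)
  linarith

/-- A half-line solution bounded above and away from zero puts the energy in the spectrum. -/
lemma mem_spectrum_of_bounded_solution {ℓ : ℕ} {p : ℤ → ℕ} (hp : ∀ n, 1 ≤ p n ∧ p n ≤ ℓ)
    {H : L2Z →L[ℝ] L2Z} (hH : IsJacobiOp p H) {E : ℝ} (hE : E ^ 2 < 1) {u : ℕ → ℝ} {c C : ℝ}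
    (hc : 0 < c) (hlow : ∀ n : ℕ, c ≤ u n ^ 2 + u (n + 1) ^ 2)
    (hupp : ∀ n, u n ^ 2 + u (n + 1) ^ 2 ≤ C)
    (hrec : ∀ n : ℕ, (p (n + 1) : ℝ) * u (n + 2) + p n * u n =
        (p (n + 1) + p n) * E * u (n + 1)) : E ∈ spectrum ℝ H := by
  have hp1 : ∀ n, (1 : ℝ) ≤ p n := fun n => by exact_mod_cast (hp n).1
  have hE1 : |E| ≤ 1 := ((sq_lt_one_iff_abs_lt_one E).1 hE).le
  by_contra hns
  rw [spectrum.notMem_iff] at hns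
  obtain ⟨U, hU⟩ := hns
  have hK : ∀ w : L2Z, ‖w‖ ≤ ‖(↑U⁻¹ : L2Z →L[ℝ] L2Z)‖ * ‖E • w - H w‖ := fun w => by
    have h1 : (↑U⁻¹ : L2Z →L[ℝ] L2Z) ((U : L2Z →L[ℝ] L2Z) w) = w := by
      rw [← mul_apply_eq_comp, Units.inv_mul, one_apply_eq_self]
    have h2 : (U : L2Z →L[ℝ] L2Z) w = E • w - H w := by
      rw [hU]
      simp [Algebra.algebraMap_eq_smul_one]
    rw [← h2]
    conv_lhs => rw [← h1]
    exact ContinuousLinearMap.le_opNorm _ _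
  set K := ‖(↑U⁻¹ : L2Z →L[ℝ] L2Z)‖
  have hubd : ∀ n, |u n| ≤ √C := fun n => Real.abs_le_sqrt (by
    linarith [hupp n, sq_nonneg (u (n + 1))])
  have hCnn : 0 ≤ C := by linarith [hupp 0, sq_nonneg (u 0), sq_nonneg (u 1)]
  have key : ∀ N : ℕ, c * N ≤ K ^ 2 * (36 * C) := fun N => by
    let f : ℤ → ℝ := fun m => if 0 ≤ m ∧ m < 2 * N then u m.toNat else 0
    have hf0 : ∀ m, ¬ (0 ≤ m ∧ m < 2 * (N : ℤ)) → f m = 0 := fun m hm => if_neg hm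
    have hfu : ∀ n : ℕ, n < 2 * N → f n = u n := fun n hn => by
      simp only [f]
      rw [if_pos ⟨by positivity, by exact_mod_cast hn⟩, Int.toNat_natCast]
    have hfb : ∀ m, |f m| ≤ √C := fun m => by
      simp only [f]
      split_ifs
      · exact hubd _
      · simp
    have hmem : Memℓp f 2 := by
      refine (memℓp_zero ?_).of_exponent_ge (zero_le)
      refine (finite_Ico (0 : ℤ) (2 * N)).subset fun m hm => ?_
      by_contra h
      exact hm (hf0 m h)
    let w : L2Z := ⟨f, hmem⟩
    have hwf : ∀ m, (w : ∀ _ : ℤ, ℝ) m = f m := fun m => rfl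
    have hwn : c * N ≤ ‖w‖ ^ 2 := by
      have h1 : c * N ≤ ∑ n ∈ Finset.range (2 * N), u n ^ 2 := by
        have : ∀ k : ℕ, c * k ≤ ∑ n ∈ Finset.range (2 * k), u n ^ 2 := fun k => by
          induction k with
          | zero => simp
          | succ k ih =>
            rw [mul_add, Finset.sum_range_succ, Finset.sum_range_succ]
            push_cast
            linarith [hlow (2 * k)]
        exact this N
      refine h1.trans ?_
      have h2 := sum_le_hasSum ((Finset.range (2 * N)).map Nat.castEmbedding)
        (fun _ _ => sq_nonneg _) (hasSum_sq_norm w)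
      rw [Finset.sum_map] at h2
      refine le_trans (Finset.sum_le_sum fun n hn => ?_) h2
      rw [hwf, Nat.castEmbedding_apply, hfu n (Finset.mem_range.1 hn)]
    have hDv : ∀ m, (E • w - H w : L2Z) m = E * f m -
        ((p m : ℝ) / (p m + p (m - 1)) * f (m + 1) + (p (m - 1) : ℝ) / (p m + p (m - 1)) *
          f (m - 1)) := fun m => by
      rw [lp.coeFn_sub, Pi.sub_apply, lp.coeFn_smul, Pi.smul_apply, hH w m]
      rfl
    have hDb : ∀ m, (E • w - H w : L2Z) m ^ 2 ≤ 9 * C := fun m => by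
      rw [hDv]
      have ha : 0 < (p m : ℝ) + p (m - 1) := by linarith [hp1 m, hp1 (m - 1)]
      have h1 : |(p m : ℝ) / (p m + p (m - 1))| ≤ 1 := by
        rw [abs_of_nonneg (by positivity), div_le_one ha]; linarith [hp1 (m - 1)]
      have h2 : |(p (m - 1) : ℝ) / (p m + p (m - 1))| ≤ 1 := by
        rw [abs_of_nonneg (by positivity), div_le_one ha]; linarith [hp1 m]
      have hmul : ∀ {s t : ℝ}, |s| ≤ 1 → |t| ≤ √C → |s * t| ≤ √C := fun {s t} hs ht => by
        rw [abs_mul]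
        calc _ ≤ 1 * √C := mul_le_mul hs ht (abs_nonneg _) zero_le_one
          _ = _ := one_mul _
      have h3 := abs_le.1 (hmul hE1 (hfb m))
      have h4 := abs_le.1 (hmul h1 (hfb (m + 1)))
      have h5 := abs_le.1 (hmul h2 (hfb (m - 1)))
      rw [← Real.sq_sqrt hCnn, show (9 : ℝ) * √C ^ 2 = (3 * √C) ^ 2 by ring]
      exact sq_le_sq' (by linarith [h3.1, h4.2, h5.2]) (by linarith [h3.2, h4.1, h5.1])
    have hD0 : ∀ m, m ∉ ({-1, 0, 2 * (N : ℤ) - 1, 2 * (N : ℤ)} : Finset ℤ) →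
        (E • w - H w : L2Z) m = 0 := fun m hm => by
      simp only [Finset.mem_insert, Finset.mem_singleton, not_or] at hm
      rw [hDv]
      by_cases h : 0 ≤ m ∧ m < 2 * (N : ℤ)
      · obtain ⟨n, rfl⟩ : ∃ n : ℕ, m = (n : ℤ) + 1 := ⟨(m - 1).toNat, by omega⟩
        have h1 : f ((n : ℤ) + 1) = u (n + 1) := by exact_mod_cast hfu (n + 1) (by omega)
        have h2 : f ((n : ℤ) + 1 + 1) = u (n + 2) := by exact_mod_cast hfu (n + 2) (by omega)
        rw [add_sub_cancel_right, h1, h2, hfu n (by omega)]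
        have ha : (p ((n : ℤ) + 1) : ℝ) + p n ≠ 0 := by
          have := hp1 ((n : ℤ) + 1); have := hp1 n; positivity
        field_simp
        linarith [hrec n]
      · rw [hf0 m h, hf0 (m + 1) (by omega), hf0 (m - 1) (by omega)]
        simp
    have hDn : ‖E • w - H w‖ ^ 2 ≤ 36 * C := by
      have h1 := hasSum_sq_norm (E • w - H w)
      have h2 := hasSum_sum_of_ne_finset_zero (L := .unconditional ℤ)
        (f := fun m => (E • w - H w : L2Z) m ^ 2)
        (s := {-1, 0, 2 * (N : ℤ) - 1, 2 * (N : ℤ)}) fun m hm => by simp only [hD0 m hm]; norm_num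
      rw [h1.unique h2]
      refine (Finset.sum_le_card_nsmul _ _ _ fun m _ => hDb m).trans ?_
      rw [nsmul_eq_mul]
      have h3 : (({-1, 0, 2 * (N : ℤ) - 1, 2 * (N : ℤ)} : Finset ℤ).card : ℝ) ≤ 4 := by
        exact_mod_cast Finset.card_le_four
      calc _ ≤ 4 * (9 * C) := mul_le_mul_of_nonneg_right h3 (by linarith)
        _ = _ := by ring
    calc c * N ≤ ‖w‖ ^ 2 := hwn
      _ ≤ (K * ‖E • w - H w‖) ^ 2 := pow_le_pow_left₀ (norm_nonneg _) (hK w) 2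
      _ = K ^ 2 * ‖E • w - H w‖ ^ 2 := mul_pow _ _ _
      _ ≤ _ := mul_le_mul_of_nonneg_left hDn (sq_nonneg _)
  obtain ⟨N, hN⟩ := exists_nat_gt (K ^ 2 * (36 * C) / c)
  rw [div_lt_iff₀ hc] at hN
  linarith [key N]

/-- Suppose `μ` is a shift-ergodic Borel probability measure on `Ω` with a local
product structure and full support, the shift has a fixed point in `Ω`, and the
set `𝔏(A,μ) = {k ∈ [0,π] : L(A^{(k)}, μ) = 0}` is infinite.  Then for every
periodic point `p ∈ Ω`, the spectrum of `H̃_p` coincides with `[−1,1]`. -/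
theorem statement10 (ℓ : ℕ) (hℓ : 1 < ℓ) (W : Set (ℕ × ℕ))
    (μ : Measure (ℤ → ℕ)) [IsProbabilityMeasure μ]
    (hconc : μ (SFT ℓ W)ᶜ = 0)
    (herg : Ergodic shift μ)
    (hlps : LocalProductStructure ℓ W μ)
    (hsupp : FullSupport ℓ W μ)
    (hfix : ∃ q ∈ SFT ℓ W, shift q = q)
    (H : (ℤ → ℕ) → (L2Z →L[ℝ] L2Z))
    (hH : ∀ p, IsJacobiOp p (H p))
    (L : ℝ → ℝ)
    (hL : ∀ k : ℝ,
      Tendsto (fun n : ℕ => (1 / (n : ℝ)) * ∫ ω, Real.log ‖AIter k ω n‖ ∂μ)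
        atTop (𝓝 (L k)))
    (hinf : {k ∈ Icc (0 : ℝ) π | L k = 0}.Infinite) :
    ∀ p ∈ SFT ℓ W, (∃ n : ℕ, 1 ≤ n ∧ shift^[n] p = p) →
      spectrum ℝ (H p) = Icc (-1 : ℝ) 1 := by
  intro p hp _
  refine Subset.antisymm (spectrum_subset_Icc hp.1 (hH p)) ?_
  rw [← closure_Ioo (by norm_num : (-1 : ℝ) ≠ 1)]
  refine closure_minimal (fun E hE => ?_) (spectrum.isClosed _)
  have hE2 : E ^ 2 < 1 := (sq_lt_one_iff_abs_lt_one E).2 (abs_lt.2 hE)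
  obtain ⟨u, c, C, hc, hlow, hupp, hrec⟩ :=
    exists_bounded_solution hconc herg hlps hsupp hfix hL hinf hp hE2
  exact mem_spectrum_of_bounded_solution hp.1 (hH p) hE2 hc hlow hupp hrec
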